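/- For every integer N ≥ 3, 𝔼 V_{ℰ³,N} = 1 − 1/(N+1) − (105 N (N−1) / 2^{N+5}) ∫₀¹ (1 − t²)⁴ (3t − t³)^{N−2} dt, where ℰ³ is an ellipsoid in ℝ³ (e.g. the closed unit ball). In particular, 𝔼 V_{ℰ³,3} = 27/512 and 𝔼 V_{ℰ³,4} = 72/715. -/

import Mathlib

open MeasureTheory Set

noncomputable section

variable {E : Type*} [NormedAddCommGroup E] [InnerProductSpace ℝ E]

/-- A symmetric convex body: a compact convex set with nonempty interior with `K = -K`. -/
def IsSymConvexBody (K : Set E) : Prop :=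
  IsCompact K ∧ Convex ℝ K ∧ (interior K).Nonempty ∧ K = -K

/-- `momentU n N K p = 𝔼 U_{K,N}^p`, the `p`-th moment of the normalized volume of the
convex hull of `N` independent uniform random points in `K ⊆ ℝⁿ`. -/
def momentU (n N : ℕ) (K : Set (EuclideanSpace ℝ (Fin n))) (p : ℝ) : ℝ :=
  (∫ x : Fin N → EuclideanSpace ℝ (Fin n) in {x | ∀ i, x i ∈ K},
      ((volume (convexHull ℝ (Set.range x))).toReal / (volume K).toReal) ^ p) /
    (volume K).toReal ^ N

/-- `momentV n N K p = 𝔼 V_{K,N}^p`, the `p`-th moment of the normalized volume of the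
symmetric convex hull `conv{±x₁, …, ±x_N}` of `N` independent uniform random points
in `K ⊆ ℝⁿ`. -/
def momentV (n N : ℕ) (K : Set (EuclideanSpace ℝ (Fin n))) (p : ℝ) : ℝ :=
  (∫ x : Fin N → EuclideanSpace ℝ (Fin n) in {x | ∀ i, x i ∈ K},
      ((volume (convexHull ℝ (Set.range x ∪ -Set.range x))).toReal / (volume K).toReal) ^ p) /
    (volume K).toReal ^ N

namespace MV

abbrev V3 := Fin 3 → ℝ

/-- index type of triples -/
abbrev Tri (N : ℕ) := {T : Finset (Fin N) // T.card = 3}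

noncomputable def sg {N : ℕ} (T : Tri N) : Fin 3 → Fin N := fun i => T.1.orderEmbOfFin T.2 i

theorem sg_inj {N : ℕ} (T : Tri N) : Function.Injective (sg T) :=
  fun _ _ h => (T.1.orderEmbOfFin T.2).injective h

theorem sg_mem {N : ℕ} (T : Tri N) (i : Fin 3) : sg T i ∈ T.1 :=
  Finset.orderEmbOfFin_mem _ _ _

theorem sg_image {N : ℕ} (T : Tri N) : Finset.univ.image (sg T) = T.1 := by
  apply Finset.eq_of_subset_of_card_le
  · intro a ha
    simp only [Finset.mem_image, Finset.mem_univ, true_and] at ha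
    obtain ⟨i, rfl⟩ := ha
    exact sg_mem T i
  · rw [Finset.card_image_of_injective _ (sg_inj T), T.2]; simp

theorem exists_sg {N : ℕ} (T : Tri N) {l : Fin N} (h : l ∈ T.1) : ∃ i, sg T i = l := by
  rw [← sg_image T] at h
  simpa using h

noncomputable def WT {N : ℕ} (x : Fin N → V3) (T : Tri N) : Matrix (Fin 3) (Fin 3) ℝ :=
  fun i => x (sg T i)

def PP {N : ℕ} (x : Fin N → V3) : Set V3 :=
  {y | ∃ c : Fin N → ℝ, ∑ i, |c i| ≤ 1 ∧ ∑ i, c i • x i = y}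

noncomputable def lam {N : ℕ} (x : Fin N → V3) (T : Tri N) (y : V3) : V3 :=
  Matrix.vecMul y (WT x T)⁻¹

noncomputable def sgnv (v : V3) : V3 := fun i => (SignType.sign (v i) : ℝ)

noncomputable def uu {N : ℕ} (x : Fin N → V3) (T : Tri N) (y : V3) : V3 :=
  Matrix.mulVec (WT x T)⁻¹ (sgnv (lam x T y))

def Fac {N : ℕ} (x : Fin N → V3) (T : Tri N) (y : V3) : Prop :=
  ∑ i, |lam x T y i| ≤ 1 ∧ ∀ l, l ∉ T.1 → |x l ⬝ᵥ uu x T y| ≤ 1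

section comb
variable {N : ℕ} {x : Fin N → V3} {y : V3}

theorem lam_spec {T : Tri N} (h : (WT x T).det ≠ 0) :
    ∑ i, lam x T y i • x (sg T i) = y := by
  have : Matrix.vecMul (lam x T y) (WT x T) = y := by
    rw [lam, Matrix.vecMul_vecMul, Matrix.nonsing_inv_mul _ (isUnit_iff_ne_zero.2 h), Matrix.vecMul_one]
  rw [Matrix.vecMul_eq_sum] at this
  exact this

theorem lam_unique {T : Tri N} (h : (WT x T).det ≠ 0) (c : V3)
    (hc : ∑ i, c i • x (sg T i) = y) : lam x T y = c := by
  have : Matrix.vecMul c (WT x T) = y := by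
    rw [Matrix.vecMul_eq_sum]; exact hc
  rw [lam, ← this, Matrix.vecMul_vecMul, Matrix.mul_nonsing_inv _ (isUnit_iff_ne_zero.2 h), Matrix.vecMul_one]

theorem uu_spec {T : Tri N} (h : (WT x T).det ≠ 0) (i : Fin 3) :
    x (sg T i) ⬝ᵥ uu x T y = SignType.sign (lam x T y i) := by
  have : Matrix.mulVec (WT x T) (uu x T y) = sgnv (lam x T y) := by
    rw [uu, Matrix.mulVec_mulVec, Matrix.mul_nonsing_inv _ (isUnit_iff_ne_zero.2 h), Matrix.one_mulVec]
  exact congrFun this i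

theorem uu_y {T : Tri N} (h : (WT x T).det ≠ 0) :
    y ⬝ᵥ uu x T y = ∑ i, |lam x T y i| := by
  conv_lhs => rw [← lam_spec (y := y) h]
  rw [sum_dotProduct]
  refine Finset.sum_congr rfl fun i _ => ?_
  rw [smul_dotProduct]
  conv_lhs => rw [show (∑ i, lam x T y i • x (sg T i)) = y from lam_spec h]
  rw [uu_spec h, smul_eq_mul, self_mul_sign]

theorem abs_le_all {T : Tri N} (h : (WT x T).det ≠ 0)
    (hF : ∀ l, l ∉ T.1 → |x l ⬝ᵥ uu x T y| ≤ 1) (l : Fin N) : |x l ⬝ᵥ uu x T y| ≤ 1 := by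
  by_cases hl : l ∈ T.1
  · obtain ⟨i, rfl⟩ := exists_sg T hl
    rw [uu_spec h]
    rcases SignType.sign (lam x T y i) with _ | _ | _ <;> simp
  · exact hF l hl

theorem opt {T : Tri N} (h : (WT x T).det ≠ 0)
    (hF : ∀ l, l ∉ T.1 → |x l ⬝ᵥ uu x T y| ≤ 1) (c : Fin N → ℝ) (hc : ∑ i, c i • x i = y) :
    ∑ i, |lam x T y i| ≤ ∑ i, |c i| := by
  rw [← uu_y h]
  conv_lhs => 
    arg 1
    rw [← hc]
  rw [sum_dotProduct]
  refine Finset.sum_le_sum fun i _ => ?_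
  rw [smul_dotProduct, smul_eq_mul]
  calc _ ≤ |c i * (x i ⬝ᵥ uu x T y)| := le_abs_self _
    _ = |c i| * |x i ⬝ᵥ uu x T y| := abs_mul _ _
    _ ≤ |c i| * 1 := by gcongr; exact abs_le_all h hF i
    _ = _ := mul_one _

noncomputable def ext0 (T : Tri N) (c : V3) : Fin N → ℝ :=
  fun l => ∑ i, if sg T i = l then c i else 0

theorem ext0_sg (T : Tri N) (c : V3) (i : Fin 3) : ext0 T c (sg T i) = c i := by
  simp [ext0, (sg_inj T).eq_iff]

theorem ext0_not (T : Tri N) (c : V3) {l : Fin N} (hl : l ∉ T.1) : ext0 T c l = 0 := by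
  refine Finset.sum_eq_zero fun i _ => ?_
  rw [if_neg]
  rintro rfl
  exact hl (sg_mem T i)

theorem sum_tri {M : Type*} [AddCommMonoid M] (T : Tri N) (f : Fin N → M) :
    (∀ l, l ∉ T.1 → f l = 0) → ∑ l, f l = ∑ i, f (sg T i) := by
  intro h
  rw [← Finset.sum_subset (Finset.subset_univ T.1) (fun l _ hl => h l hl), ← sg_image T,
    Finset.sum_image (fun a _ b _ hab => sg_inj T hab)]

theorem ext0_abs (T : Tri N) (c : V3) : ∑ l, |ext0 T c l| = ∑ i, |c i| := by
  rw [sum_tri T _ (fun l hl => by rw [ext0_not T c hl, abs_zero])]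
  simp [ext0_sg]

theorem ext0_smul (T : Tri N) (c : V3) (x : Fin N → V3) :
    ∑ l, ext0 T c l • x l = ∑ i, c i • x (sg T i) := by
  rw [sum_tri T _ (fun l hl => by rw [ext0_not T c hl, zero_smul])]
  simp [ext0_sg]

theorem mem_of_fac {T : Tri N} (h : (WT x T).det ≠ 0) (hF : Fac x T y) : y ∈ PP x :=
  ⟨ext0 T (lam x T y), by rw [ext0_abs]; exact hF.1, by rw [ext0_smul, lam_spec h]⟩

theorem fac_unique {T T' : Tri N} (hd : ∀ T : Tri N, (WT x T).det ≠ 0)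
    (hs : ∀ l, l ∉ T.1 → |x l ⬝ᵥ uu x T y| ≠ 1) (hy : ∀ T : Tri N, ∀ i, lam x T y i ≠ 0)
    (hF : Fac x T y) (hF' : Fac x T' y) : T' = T := by
  have key : T'.1 ⊆ T.1 := by
    intro l hl
    by_contra hlT
    obtain ⟨j, rfl⟩ := exists_sg T' hl
    have h1 : ∑ i, |lam x T' y i| ≤ ∑ i, |lam x T y i| := by
      rw [← ext0_abs T (lam x T y)]
      exact opt (hd T') hF'.2 _ (by rw [ext0_smul, lam_spec (hd T)])
    rw [← uu_y (hd T)] at h1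
    have h2 : y ⬝ᵥ uu x T y = ∑ i, lam x T' y i * (x (sg T' i) ⬝ᵥ uu x T y) := by
      conv_lhs => 
        arg 1
        rw [← lam_spec (y := y) (hd T')]
      rw [sum_dotProduct]; simp [smul_dotProduct]
    rw [h2] at h1
    refine absurd h1 (not_le.2 ?_)
    have b : ∀ i, lam x T' y i * (x (sg T' i) ⬝ᵥ uu x T y) ≤ |lam x T' y i| * |x (sg T' i) ⬝ᵥ uu x T y| :=
      fun i => (le_abs_self _).trans (abs_mul _ _).le
    refine Finset.sum_lt_sum (fun i _ => ?_) ⟨j, Finset.mem_univ _, ?_⟩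
    · refine (b i).trans ?_
      exact mul_le_of_le_one_right (abs_nonneg _) (abs_le_all (hd T) hF.2 _)
    · refine (b j).trans_lt ?_
      exact mul_lt_of_lt_one_right (abs_pos.2 (hy T' j)) (lt_of_le_of_ne (hF.2 _ hlT) (hs _ hlT))
  apply Subtype.ext
  exact Finset.eq_of_subset_of_card_le key (by rw [T.2, T'.2])

/-- pivot step -/
theorem pivot {T : Tri N} (hd : ∀ T : Tri N, (WT x T).det ≠ 0) (hy : ∀ T : Tri N, ∀ i, lam x T y i ≠ 0)
    {l : Fin N} (hl : l ∉ T.1) (h : 1 < |x l ⬝ᵥ uu x T y|) :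
    ∃ T' : Tri N, ∑ i, |lam x T' y i| < ∑ i, |lam x T y i| := by
  set L := lam x T y with hL
  set τ : ℝ := ((SignType.sign (x l ⬝ᵥ uu x T y) : SignType) : ℝ) with hτ
  set d := lam x T (x l) with hdd
  have hdot : x l ⬝ᵥ uu x T y = ∑ i, d i * SignType.sign (L i) := by
    conv_lhs => 
        arg 1
        rw [← lam_spec (y := x l) (hd T)]
    rw [sum_dotProduct]
    refine Finset.sum_congr rfl fun i _ => ?_
    rw [smul_dotProduct, uu_spec (hd T), smul_eq_mul]
  have hτs : τ * (x l ⬝ᵥ uu x T y) = |x l ⬝ᵥ uu x T y| := by rw [hτ, sign_mul_self]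
  have hτa : |τ| = 1 := by
    have : x l ⬝ᵥ uu x T y ≠ 0 := by intro h0; rw [h0] at h; simp at h; linarith
    rcases lt_or_gt_of_ne this with h' | h' <;> simp [hτ, h']
  let I := Finset.univ.filter (fun i => 0 < SignType.sign (L i) * (τ * d i))
  have hI : I.Nonempty := by
    by_contra hne
    rw [Finset.not_nonempty_iff_eq_empty, Finset.filter_eq_empty_iff] at hne
    have : τ * (x l ⬝ᵥ uu x T y) ≤ 0 := by
      rw [hdot, Finset.mul_sum]
      refine Finset.sum_nonpos fun i hi => ?_
      have := hne hi
      push Not at this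
      linarith
    linarith [abs_nonneg (x l ⬝ᵥ uu x T y)]
  obtain ⟨j, hjI, hj⟩ := Finset.exists_min_image I (fun i => L i / (τ * d i)) hI
  have hjpos : 0 < SignType.sign (L j) * (τ * d j) := (Finset.mem_filter.1 hjI).2
  set t := L j / (τ * d j) with ht
  have hdj : τ * d j ≠ 0 := fun h0 => by rw [h0] at hjpos; simp at hjpos
  have aux : ∀ i, 0 < SignType.sign (L i) * (τ * d i) → L i / (τ * d i) = |L i| / (SignType.sign (L i) * (τ * d i)) := by
    intro i hi
    rcases lt_or_gt_of_ne (hy T i) with h' | h'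
    · rw [← hL] at h'
      simp only [sign_neg h', abs_of_neg h', SignType.coe_neg_one, neg_mul, one_mul, neg_div_neg_eq]
    · rw [← hL] at h'
      simp only [sign_pos h', abs_of_pos h', SignType.coe_one, one_mul]
  have htpos : 0 < t := by
    rw [ht, aux j hjpos]
    exact div_pos (abs_pos.2 (hy T j)) hjpos
  have hsgn : ∀ i, 0 ≤ SignType.sign (L i) * (L i - t * (τ * d i)) := by
    intro i
    have e : SignType.sign (L i) * (L i - t * (τ * d i)) = |L i| - t * (SignType.sign (L i) * (τ * d i)) := by
      rw [mul_sub, sign_mul_self]; ring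
    rw [e]
    by_cases hi : 0 < SignType.sign (L i) * (τ * d i)
    · have := hj i (by simp only [I, Finset.mem_filter, Finset.mem_univ, true_and]; exact hi)
      rw [aux i hi, le_div_iff₀ hi] at this
      linarith
    · push Not at hi
      nlinarith [abs_nonneg (L i)]
  have hsgn1 : ∀ i, |(SignType.sign (L i) : ℝ)| = 1 := by
    intro i
    rcases lt_or_gt_of_ne (hy T i) with h' | h' <;> rw [← hL] at h' <;> simp [h']
  have habs : ∀ i, |L i - t * (τ * d i)| = SignType.sign (L i) * (L i - t * (τ * d i)) := by
    intro i
    rw [← abs_of_nonneg (hsgn i), abs_mul, hsgn1, one_mul]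
  have hzero : L j - t * (τ * d j) = 0 := by rw [ht, div_mul_cancel₀ _ hdj, sub_self]
  -- new coefficients
  let c : Fin N → ℝ := fun m => ext0 T (fun i => L i - t * (τ * d i)) m + if m = l then t * τ else 0
  have hcy : ∑ m, c m • x m = y := by
    simp only [c, add_smul, Finset.sum_add_distrib]
    rw [ext0_smul]
    simp only [sub_smul, Finset.sum_sub_distrib, ite_smul, zero_smul, Finset.sum_ite_eq', Finset.mem_univ, if_true]
    rw [lam_spec (hd T)]
    have : ∑ i, (t * (τ * d i)) • x (sg T i) = (t * τ) • x l := by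
      conv_rhs => rw [← lam_spec (y := x l) (hd T)]
      rw [Finset.smul_sum]
      refine Finset.sum_congr rfl fun i _ => ?_
      rw [smul_smul, ← mul_assoc]
    rw [this]; abel
  let T' : Tri N := ⟨insert l (T.1.erase (sg T j)), by
    rw [Finset.card_insert_of_notMem (fun h => hl (Finset.mem_of_mem_erase h)),
      Finset.card_erase_of_mem (sg_mem T j), T.2]⟩
  have hc0 : ∀ m, m ∉ T'.1 → c m = 0 := by
    intro m hm
    simp only [T', Finset.mem_insert, Finset.mem_erase, not_or, not_and] at hm
    simp only [c, if_neg hm.1, add_zero]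
    by_cases hmT : m ∈ T.1
    · obtain ⟨i, rfl⟩ := exists_sg T hmT
      by_cases hij : i = j
      · rw [ext0_sg, hij]; exact hzero
      · exact absurd hmT (hm.2 (fun h => hij (sg_inj T h)))
    · exact ext0_not _ _ hmT
  have hcT' : lam x T' y = fun i => c (sg T' i) := by
    apply lam_unique (hd T')
    rw [← hcy]
    exact (sum_tri T' (fun m => c m • x m) (fun m hm => by simp only [hc0 m hm, zero_smul])).symm
  refine ⟨T', ?_⟩
  have e1 : ∑ i, |lam x T' y i| = ∑ m, |c m| := by
    rw [hcT', sum_tri T' _ (fun m hm => by rw [hc0 m hm, abs_zero])]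
  rw [e1]
  have e2 : ∑ m, |c m| ≤ ∑ i, |L i - t * (τ * d i)| + t := by
    calc ∑ m, |c m| ≤ ∑ m, (|ext0 T (fun i => L i - t * (τ * d i)) m| + |if m = l then t * τ else 0|) :=
          Finset.sum_le_sum fun m _ => abs_add_le _ _
      _ = _ := by
        rw [Finset.sum_add_distrib, ext0_abs]
        congr 1
        rw [Finset.sum_eq_single l (fun b _ hb => by rw [if_neg hb, abs_zero]) (by simp), if_pos rfl, abs_mul, hτa,
          abs_of_pos htpos, mul_one]
  refine e2.trans_lt ?_
  have e3 : ∑ i, |L i - t * (τ * d i)| = ∑ i, |L i| - t * |x l ⬝ᵥ uu x T y| := by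
    rw [← hτs, hdot, Finset.mul_sum, Finset.mul_sum, ← Finset.sum_sub_distrib]
    refine Finset.sum_congr rfl fun i _ => ?_
    rw [habs, mul_sub, sign_mul_self]; ring
  rw [e3]
  nlinarith

theorem exists_fac (hN : 3 ≤ N) (hd : ∀ T : Tri N, (WT x T).det ≠ 0)
    (hy : ∀ T : Tri N, ∀ i, lam x T y i ≠ 0) (hP : y ∈ PP x) : ∃ T, Fac x T y := by
  have : Nonempty (Tri N) := by
    obtain ⟨T, _, hT⟩ := Finset.exists_subset_card_eq (s := (Finset.univ : Finset (Fin N))) (n := 3) (by simpa using hN)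
    exact ⟨⟨T, hT⟩⟩
  obtain ⟨T, hT⟩ := Finite.exists_min (fun T : Tri N => ∑ i, |lam x T y i|)
  have hF : ∀ l, l ∉ T.1 → |x l ⬝ᵥ uu x T y| ≤ 1 := by
    intro l hl
    by_contra! hlt
    obtain ⟨T', hT'⟩ := pivot hd hy hl hlt
    exact absurd (hT T') (not_le.2 hT')
  obtain ⟨c, hc1, hc2⟩ := hP
  exact ⟨T, (opt (hd T) hF c hc2).trans hc1, hF⟩

end comb
end MV

namespace MV

theorem null_of_line {E : Type*} [NormedAddCommGroup E] [NormedSpace ℝ E] [MeasurableSpace E] [BorelSpace E]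
    [FiniteDimensional ℝ E] (μ : Measure E) [μ.IsAddHaarMeasure] {S : Set E} (hS : MeasurableSet S) (v : E)
    (h : ∀ x, volume {t : ℝ | x + t • v ∈ S} = 0) : μ S = 0 := by
  have hm : MeasurableSet {p : ℝ × E | p.2 + p.1 • v ∈ S} := by
    apply measurableSet_preimage _ hS
    fun_prop
  have h1 : (volume.prod μ) {p : ℝ × E | p.2 + p.1 • v ∈ S} = 0 := by
    rw [Measure.prod_apply_symm hm]
    simp only [preimage_ofPred_eq]
    simp [h]
  rw [Measure.prod_apply hm] at h1
  have h2 : ∀ t : ℝ, μ (Prod.mk t ⁻¹' {p : ℝ × E | p.2 + p.1 • v ∈ S}) = μ S := by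
    intro t
    have : Prod.mk t ⁻¹' {p : ℝ × E | p.2 + p.1 • v ∈ S} = (fun x => x + t • v) ⁻¹' S := rfl
    rw [this, measure_preimage_add_right]
  simp only [h2, lintegral_const] at h1
  simpa using h1

theorem meas_inv (i j : Fin 3) : Measurable fun W : Fin 3 → V3 => (Matrix.of W)⁻¹ i j := by
  simp only [Matrix.inv_def, Ring.inverse_eq_inv', Matrix.smul_apply, smul_eq_mul]
  apply Measurable.mul
  · apply Measurable.inv
    apply Continuous.measurable
    exact Continuous.matrix_det (by fun_prop)
  · apply Continuous.measurable
    have : Continuous fun W : Fin 3 → V3 => (Matrix.of W).adjugate := Continuous.matrix_adjugate (by fun_prop)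
    exact this.matrix_elem i j

theorem meas_det : Measurable fun W : Fin 3 → V3 => (Matrix.of W).det := by
  apply Continuous.measurable
  exact Continuous.matrix_det (by fun_prop)

theorem meas_invMul {α : Type*} [MeasurableSpace α] {f : α → Fin 3 → V3} {g : α → V3} (hf : Measurable f)
    (hg : Measurable g) : Measurable fun a => Matrix.mulVec (Matrix.of (f a))⁻¹ (g a) := by
  rw [measurable_pi_iff]
  intro i
  simp only [Matrix.mulVec, dotProduct]
  refine Finset.measurable_sum _ fun j _ => ?_
  exact ((meas_inv i j).comp hf).mul ((measurable_pi_apply j).comp hg)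

theorem meas_sgnv : Measurable sgnv := by
  rw [measurable_pi_iff]
  intro i
  have : (fun v : V3 => sgnv v i) = (fun t : ℝ => if 0 < t then (1:ℝ) else if t < 0 then -1 else 0) ∘ fun v => v i := by
    funext v
    simp only [sgnv, Function.comp, sign_apply]
    split_ifs <;> simp
  rw [this]
  refine Measurable.comp (g := fun t : ℝ => if 0 < t then (1:ℝ) else if t < 0 then -1 else 0) ?_ (measurable_pi_apply (X := fun _ : Fin 3 => ℝ) i)
  refine Measurable.ite measurableSet_Ioi measurable_const ?_
  exact Measurable.ite measurableSet_Iio measurable_const measurable_const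

theorem meas_dot {α : Type*} [MeasurableSpace α] {f g : α → V3} (hf : Measurable f)
    (hg : Measurable g) : Measurable fun a => f a ⬝ᵥ g a := by
  simp only [dotProduct]
  refine Finset.measurable_sum _ fun j _ => ?_
  exact ((measurable_pi_apply j).comp hf).mul ((measurable_pi_apply j).comp hg)

theorem det_null : volume {W : Fin 3 → V3 | (Matrix.of W).det = 0} = 0 := by
  refine null_of_line volume (measurableSet_preimage meas_det (measurableSet_singleton 0)) (fun i j => if i = j then 1 else 0) ?_
  intro W
  apply Set.Finite.measure_zero
  refine Set.Finite.subset ((-(Matrix.of W)).charpoly.rootSet_finite ℝ) ?_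
  intro t ht
  rw [Polynomial.mem_rootSet]
  refine ⟨(Matrix.charpoly_monic _).ne_zero, ?_⟩
  rw [Polynomial.coe_aeval_eq_eval, Matrix.eval_charpoly]
  simp only [mem_ofPred_eq] at ht
  rw [← ht]
  congr 1
  ext i j
  simp [Matrix.scalar_apply, Matrix.diagonal_apply, Matrix.of_apply]
  ring

theorem dot_null (u : V3) : volume {z : V3 | |z ⬝ᵥ u| = 1} = 0 := by
  refine null_of_line volume (measurableSet_preimage (meas_dot measurable_id measurable_const).norm (measurableSet_singleton 1)) u ?_
  intro z
  by_cases hu : u = 0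
  · subst hu; simp
  have huu : u ⬝ᵥ u ≠ 0 := by simpa using hu
  apply Set.Finite.measure_zero
  refine Set.Finite.subset (Set.Finite.insert ((1 - z ⬝ᵥ u) / (u ⬝ᵥ u)) (Set.finite_singleton ((-1 - z ⬝ᵥ u) / (u ⬝ᵥ u)))) ?_
  intro t ht
  simp only [mem_ofPred_eq, add_dotProduct, smul_dotProduct, smul_eq_mul] at ht
  have ht : |z ⬝ᵥ u + t * (u ⬝ᵥ u)| = 1 := ht
  rcases (abs_eq zero_le_one).1 ht with h | h
  · left; rw [eq_div_iff huu]; linarith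
  · right; rw [mem_singleton_iff, eq_div_iff huu]; linarith

variable {N : ℕ}

noncomputable def spl (T : Tri N) (x : Fin N → V3) : (Fin 3 → V3) × ({l // l ∉ T.1} → V3) :=
  (fun i => x (sg T i), fun l => x l)

noncomputable def eqv (T : Tri N) : Fin 3 ⊕ {l // l ∉ T.1} ≃ Fin N :=
  Equiv.ofBijective (Sum.elim (sg T) Subtype.val) (by
    constructor
    · rintro (a | a) (b | b) h <;> simp only [Sum.elim_inl, Sum.elim_inr] at h
      · rw [sg_inj T h]
      · exact absurd (h ▸ sg_mem T a) b.2
      · exact absurd (h ▸ sg_mem T b) a.2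
      · rw [Subtype.ext h]
    · intro l
      by_cases h : l ∈ T.1
      · obtain ⟨i, hi⟩ := exists_sg T h
        exact ⟨Sum.inl i, hi⟩
      · exact ⟨Sum.inr ⟨l, h⟩, rfl⟩)

theorem spl_mp (T : Tri N) : MeasurePreserving (spl T) := by
  have h1 := (volume_measurePreserving_piCongrLeft (fun _ : Fin N => V3) (eqv T)).symm
  have h2 := volume_measurePreserving_sumPiEquivProdPi (fun _ : Fin 3 ⊕ {l // l ∉ T.1} => V3)
  exact h2.comp h1

def SS {κ : Type*} (W : Fin 3 → V3) (z : κ → V3) : Set V3 :=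
  {v | ∑ i, |v i| ≤ 1 ∧ ∀ l, |z l ⬝ᵥ Matrix.mulVec (Matrix.of W)⁻¹ (sgnv v)| ≤ 1}

def OO : Set V3 := {v | ∑ i, |v i| ≤ 1}

theorem meas_OO : MeasurableSet OO := by
  apply measurableSet_le _ measurable_const
  fun_prop

theorem meas_SS {κ : Type*} [Fintype κ] :
    MeasurableSet {p : ((Fin 3 → V3) × (κ → V3)) × V3 | p.2 ∈ SS p.1.1 p.1.2} := by
  have : {p : ((Fin 3 → V3) × (κ → V3)) × V3 | p.2 ∈ SS p.1.1 p.1.2} =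
    Prod.snd ⁻¹' OO ∩ ⋂ l : κ, {p | |p.1.2 l ⬝ᵥ Matrix.mulVec (Matrix.of p.1.1)⁻¹ (sgnv p.2)| ≤ 1} := by
    ext p; simp [SS, OO]
  rw [this]
  refine (measurable_snd meas_OO).inter (MeasurableSet.iInter fun l => ?_)
  refine measurableSet_le (Measurable.norm (meas_dot ?_ (meas_invMul ?_ ?_))) measurable_const
  · fun_prop
  · fun_prop
  · exact meas_sgnv.comp measurable_snd

theorem vol_fac (x : Fin N → V3) (T : Tri N) (h : (WT x T).det ≠ 0) :
    volume {y | Fac x T y} = ENNReal.ofReal |(WT x T).det| * volume (SS (spl T x).1 (spl T x).2) := by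
  have e : {y | Fac x T y} = (Matrix.toLin' (WT x T)⁻¹.transpose) ⁻¹' (SS (spl T x).1 (spl T x).2) := by
    ext y
    simp only [Fac, uu, lam, mem_ofPred_eq, SS, mem_preimage, Matrix.toLin'_apply, Matrix.mulVec_transpose, spl, Subtype.forall]
    rfl
  rw [e, Measure.addHaar_preimage_linearMap]
  · congr 2
    simp
  · simp [h]

theorem meas_fac (x : Fin N → V3) (T : Tri N) : MeasurableSet {y | Fac x T y} := by
  have e : {y | Fac x T y} = (fun y => (spl T x, (Matrix.toLin' (WT x T)⁻¹.transpose) y)) ⁻¹' 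
      {p : ((Fin 3 → V3) × ({l // l ∉ T.1} → V3)) × V3 | p.2 ∈ SS p.1.1 p.1.2} := by
    ext y
    simp only [Fac, uu, lam, mem_ofPred_eq, SS, mem_preimage, Matrix.toLin'_apply, Matrix.mulVec_transpose, spl, Subtype.forall]
    rfl
  rw [e]
  refine measurableSet_preimage ?_ meas_SS
  refine measurable_const.prodMk ?_
  exact (LinearMap.continuous_of_finiteDimensional _).measurable

def Gen (x : Fin N → V3) : Prop :=
  ∀ T : Tri N, (WT x T).det ≠ 0 ∧ ∀ ε : Fin 3 → SignType, ∀ l : {l // l ∉ T.1},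
    |x l ⬝ᵥ Matrix.mulVec (WT x T)⁻¹ (fun i => (ε i : ℝ))| ≠ 1

theorem ae_gen : ∀ᵐ x : Fin N → V3, Gen x := by
  unfold Gen
  rw [ae_all_iff]
  intro T
  have key : ∀ᵐ p : (Fin 3 → V3) × ({l // l ∉ T.1} → V3), (Matrix.of p.1).det ≠ 0 ∧ 
     ∀ ε : Fin 3 → SignType, ∀ l, |p.2 l ⬝ᵥ Matrix.mulVec (Matrix.of p.1)⁻¹ (fun i => (ε i : ℝ))| ≠ 1 := by
    rw [Filter.eventually_and]
    constructor
    · have : ∀ᵐ W : Fin 3 → V3, (Matrix.of W).det ≠ 0 := by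
        rw [ae_iff]; simpa using det_null
      exact Measure.quasiMeasurePreserving_fst.ae this
    · rw [ae_all_iff]
      intro ε
      rw [ae_all_iff]
      intro l
      rw [ae_iff]
      simp only [ne_eq, not_not]
      refine (Measure.measure_prod_null ?_).2 ?_
      · refine measurableSet_preimage (Measurable.norm (meas_dot ?_ (meas_invMul ?_ measurable_const))) (measurableSet_singleton 1)
        · fun_prop
        · fun_prop
      · refine Filter.Eventually.of_forall fun W => ?_
        have := (Measure.pi_eval_preimage_null (fun _ : {l // l ∉ T.1} => (volume : Measure V3)) (i := l) (dot_null (Matrix.mulVec (Matrix.of W)⁻¹ (fun i => (ε i : ℝ)))))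
        exact this
  exact (spl_mp T).quasiMeasurePreserving.ae key

end MV

namespace MV
variable {N : ℕ}

theorem lam_null (x : Fin N → V3) (T : Tri N) (h : (WT x T).det ≠ 0) (i : Fin 3) :
    volume {y | lam x T y i = 0} = 0 := by
  refine null_of_line volume ?_ (x (sg T i)) ?_
  · refine measurableSet_preimage (f := fun y => lam x T y i) ?_ (measurableSet_singleton 0)
    apply Continuous.measurable
    unfold lam
    fun_prop
  · intro y
    apply Set.Finite.measure_zero
    refine Set.Finite.subset (Set.finite_singleton (- lam x T y i)) ?_
    intro t ht
    have e : lam x T (y + t • x (sg T i)) = lam x T y + t • Pi.single i 1 := by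
      apply lam_unique h
      simp only [Pi.add_apply, add_smul, Finset.sum_add_distrib]
      rw [lam_spec h]
      congr 1
      rw [Finset.sum_eq_single i]
      · simp
      · intro b _ hb; simp [hb]
      · simp
    simp only [mem_ofPred_eq, e] at ht
    simp at ht ⊢
    linarith

theorem vol_PP (hN : 3 ≤ N) (x : Fin N → V3) (hx : Gen x) :
    volume (PP x) = ∑ T : Tri N, ENNReal.ofReal |(Matrix.of (spl T x).1).det| * 
      volume (SS (spl T x).1 (spl T x).2) := by
  have hd : ∀ T : Tri N, (WT x T).det ≠ 0 := fun T => (hx T).1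
  have hy : ∀ᵐ y : V3, ∀ T : Tri N, ∀ i, lam x T y i ≠ 0 := by
    rw [ae_all_iff]; intro T
    rw [ae_all_iff]; intro i
    rw [ae_iff]
    simpa using lam_null x T (hd T) i
  have hs : ∀ (T : Tri N) (y : V3) l, l ∉ T.1 → |x l ⬝ᵥ uu x T y| ≠ 1 := by
    intro T y l hl
    exact (hx T).2 (fun i => SignType.sign (lam x T y i)) ⟨l, hl⟩
  have e1 : PP x =ᵐ[volume] ⋃ T : Tri N, {y | Fac x T y} := by
    filter_upwards [hy] with y hy
    apply propext
    change y ∈ PP x ↔ y ∈ ⋃ T : Tri N, {y | Fac x T y}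
    rw [mem_iUnion]
    constructor
    · intro h; exact exists_fac hN hd hy h
    · rintro ⟨T, h⟩; exact mem_of_fac (hd T) h
  rw [measure_congr e1, measure_iUnion₀]
  · rw [tsum_fintype]
    refine Finset.sum_congr rfl fun T _ => ?_
    rw [vol_fac x T (hd T)]
    rfl
  · intro T T' hne
    refine measure_mono_null ?_ (ae_iff.1 hy)
    rintro y ⟨h1, h2⟩ hyy
    exact hne (fac_unique hd (hs T' y) hyy h2 h1)
  · intro T
    exact (meas_fac x T).nullMeasurableSet

def BB : Set V3 := {v | ∑ i, v i ^ 2 ≤ 1}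

theorem meas_BB : MeasurableSet BB := by
  apply measurableSet_le _ measurable_const
  fun_prop

theorem meas_BN {κ : Type*} [Countable κ] : MeasurableSet {x : κ → V3 | ∀ i, x i ∈ BB} := by
  have : {x : κ → V3 | ∀ i, x i ∈ BB} = ⋂ i, (fun x => x i) ⁻¹' BB := by ext; simp
  rw [this]
  exact MeasurableSet.iInter fun i => measurable_pi_apply i meas_BB

noncomputable def GG (u : V3) : ENNReal := volume {z | z ∈ BB ∧ |z ⬝ᵥ u| ≤ 1}

theorem meas_GG : Measurable GG := by
  have : MeasurableSet {p : V3 × V3 | p.2 ∈ BB ∧ |p.2 ⬝ᵥ p.1| ≤ 1} := by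
    refine (measurable_snd meas_BB).inter ?_
    exact measurableSet_le (Measurable.norm (meas_dot measurable_snd measurable_fst)) measurable_const
  exact measurable_measure_prodMk_left this

noncomputable def CC (k : ℕ) : ENNReal := ∫⁻ W in {W : Fin 3 → V3 | ∀ i, W i ∈ BB}, 
  ENNReal.ofReal |(Matrix.of W).det| * GG (Matrix.mulVec (Matrix.of W)⁻¹ 1) ^ k

theorem flip_mp (ε : Fin 3 → ℝ) (hε : ∀ i, ε i = 1 ∨ ε i = -1) :
    MeasurePreserving (fun (W : Fin 3 → V3) i => ε i • W i) := by
  apply volume_preserving_pi (f := fun i (w : V3) => ε i • w)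
  intro i
  rcases hε i with h | h
  · simp only [h, one_smul]; exact MeasurePreserving.id _
  · simp only [h, neg_smul, one_smul]; exact Measure.measurePreserving_neg volume

theorem CC_flip (k : ℕ) (ε : V3) (hε : ∀ i, ε i = 1 ∨ ε i = -1) :
    ∫⁻ W in {W : Fin 3 → V3 | ∀ i, W i ∈ BB}, 
      ENNReal.ofReal |(Matrix.of W).det| * GG (Matrix.mulVec (Matrix.of W)⁻¹ ε) ^ k = CC k := by
  have hpre : {W : Fin 3 → V3 | ∀ i, W i ∈ BB} = 
      (fun (W : Fin 3 → V3) i => ε i • W i) ⁻¹' {W : Fin 3 → V3 | ∀ i, W i ∈ BB} := by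
    ext W
    simp only [mem_ofPred_eq, mem_preimage, BB, Pi.smul_apply, smul_eq_mul, mul_pow]
    refine forall_congr' fun i => ?_
    have : ε i ^ 2 = 1 := by rcases hε i with h | h <;> rw [h] <;> norm_num
    simp [this]
  have hof : ∀ W : Fin 3 → V3, Matrix.of (fun i => ε i • W i) = Matrix.diagonal ε * Matrix.of W := by
    intro W
    ext i j
    simp [Matrix.diagonal_mul]
  have hεε : Matrix.diagonal ε * Matrix.diagonal ε = 1 := by
    rw [Matrix.diagonal_mul_diagonal]
    ext i j
    rw [Matrix.diagonal_apply, Matrix.one_apply]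
    split_ifs
    · rcases hε i with h | h <;> rw [h] <;> norm_num
    · rfl
  have hinv : (Matrix.diagonal ε)⁻¹ = Matrix.diagonal ε := Matrix.inv_eq_left_inv hεε
  have hdet : |(Matrix.diagonal ε).det| = 1 := by
    rw [Matrix.det_diagonal, Finset.abs_prod]
    refine Finset.prod_eq_one fun i _ => ?_
    rcases hε i with h | h <;> rw [h] <;> norm_num
  have := (flip_mp ε hε).setLIntegral_comp_preimage (meas_BN (κ := Fin 3)) 
    (f := fun W => ENNReal.ofReal |(Matrix.of W).det| * GG (Matrix.mulVec (Matrix.of W)⁻¹ ε) ^ k) (by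
      refine Measurable.mul (meas_det.norm.ennreal_ofReal) (Measurable.pow_const ?_ _)
      exact meas_GG.comp (meas_invMul measurable_id measurable_const))
  rw [← this, ← hpre, CC]
  refine lintegral_congr fun W => ?_
  rw [hof, Matrix.det_mul, abs_mul, hdet, one_mul, Matrix.mul_inv_rev, hinv, ← Matrix.mulVec_mulVec]
  congr 4
  ext i
  rw [Matrix.mulVec_diagonal]
  rcases hε i with h | h <;> rw [h] <;> norm_num

theorem ae_ne : ∀ᵐ v : V3, ∀ i, v i ≠ 0 := by
  rw [ae_all_iff]
  intro i
  rw [ae_iff]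
  simp only [ne_eq, not_not]
  exact Measure.pi_hyperplane (fun _ : Fin 3 => (volume : Measure ℝ)) i 0

theorem sec (k : ℕ) {κ : Type*} [Fintype κ] (hκ : Fintype.card κ = k) (W : Fin 3 → V3) :
    ∫⁻ z in {z : κ → V3 | ∀ l, z l ∈ BB}, volume (SS W z) = 
    ∫⁻ v in OO, GG (Matrix.mulVec (Matrix.of W)⁻¹ (sgnv v)) ^ k := by
  have hm : MeasurableSet {p : (κ → V3) × V3 | p.2 ∈ SS W p.1} := by
    have : Measurable fun p : (κ → V3) × V3 => ((W, p.1), p.2) := by fun_prop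
    exact this meas_SS
  have hm2 : MeasurableSet {p : (κ → V3) × V3 | (∀ l, p.1 l ∈ BB) ∧ p.2 ∈ SS W p.1} :=
    (measurable_fst meas_BN).inter hm
  have e1 : ∫⁻ z in {z : κ → V3 | ∀ l, z l ∈ BB}, volume (SS W z) = 
     (volume.prod volume) {p : (κ → V3) × V3 | (∀ l, p.1 l ∈ BB) ∧ p.2 ∈ SS W p.1} := by
    rw [Measure.prod_apply hm2, ← lintegral_indicator meas_BN]
    refine lintegral_congr fun z => ?_
    by_cases hz : z ∈ {z : κ → V3 | ∀ l, z l ∈ BB}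
    · rw [indicator_of_mem hz]
      congr 1
      ext v
      simp only [mem_preimage, mem_ofPred_eq]
      exact ⟨fun h => ⟨hz, h⟩, fun h => h.2⟩
    · rw [indicator_of_notMem hz]
      have : Prod.mk z ⁻¹' {p : (κ → V3) × V3 | (∀ l, p.1 l ∈ BB) ∧ p.2 ∈ SS W p.1} = ∅ := by
        ext v
        simp only [mem_preimage, mem_ofPred_eq, mem_empty_iff_false, iff_false]
        exact fun h => hz h.1
      rw [this, measure_empty]
  rw [e1, Measure.prod_apply_symm hm2, ← lintegral_indicator meas_OO]
  refine lintegral_congr fun v => ?_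
  by_cases hv : v ∈ OO
  · rw [indicator_of_mem hv]
    have : (fun x => (x, v)) ⁻¹' {p : (κ → V3) × V3 | (∀ l, p.1 l ∈ BB) ∧ p.2 ∈ SS W p.1} = 
       Set.pi univ fun _ : κ => {z | z ∈ BB ∧ |z ⬝ᵥ Matrix.mulVec (Matrix.of W)⁻¹ (sgnv v)| ≤ 1} := by
      ext z
      simp only [mem_preimage, mem_ofPred_eq, SS, mem_pi, mem_univ, true_implies]
      constructor
      · intro h l; exact ⟨h.1 l, h.2.2 l⟩
      · intro h; exact ⟨fun l => (h l).1, hv, fun l => (h l).2⟩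
    rw [this, volume_pi_pi, Finset.prod_const, Finset.card_univ, hκ]
    rfl
  · rw [indicator_of_notMem hv]
    have : (fun x => (x, v)) ⁻¹' {p : (κ → V3) × V3 | (∀ l, p.1 l ∈ BB) ∧ p.2 ∈ SS W p.1} = ∅ := by
      ext z
      simp only [mem_preimage, mem_ofPred_eq, SS, mem_empty_iff_false, iff_false]
      exact fun h => hv h.2.1
    rw [this, measure_empty]

theorem vol_OO : volume OO = ENNReal.ofReal (4 / 3) := by
  have := MeasureTheory.volume_sum_rpow_le (ι := Fin 3) (p := 1) le_rfl 1
  have e : OO = {x : Fin 3 → ℝ | (∑ i, |x i| ^ (1:ℝ)) ^ (1 / (1:ℝ)) ≤ 1} := by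
    ext v; simp [OO]
  rw [e, this]
  simp
  have : Real.Gamma (3 + 1) = 6 := by
    have h := Real.Gamma_nat_eq_factorial 3
    push_cast at h
    rw [h]; norm_num [Nat.factorial]
  have h2 : Real.Gamma (1 + 1) = 1 := by norm_num
  rw [this, h2]; norm_num

theorem term_T (T : Tri N) : ∫⁻ x in {x : Fin N → V3 | ∀ i, x i ∈ BB}, 
    ENNReal.ofReal |(Matrix.of (spl T x).1).det| * volume (SS (spl T x).1 (spl T x).2) = 
    ENNReal.ofReal (4 / 3) * CC (N - 3) := by
  have hpre : {x : Fin N → V3 | ∀ i, x i ∈ BB} = spl T ⁻¹' 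
      ({W : Fin 3 → V3 | ∀ i, W i ∈ BB} ×ˢ {z : {l // l ∉ T.1} → V3 | ∀ l, z l ∈ BB}) := by
    ext x
    simp only [mem_ofPred_eq, mem_preimage, mem_prod, spl, Subtype.forall]
    constructor
    · intro h; exact ⟨fun i => h _, fun l _ => h l⟩
    · rintro ⟨h1, h2⟩ l
      by_cases hl : l ∈ T.1
      · obtain ⟨i, rfl⟩ := exists_sg T hl; exact h1 i
      · exact h2 l hl
  have hmv : Measurable fun p : (Fin 3 → V3) × ({l // l ∉ T.1} → V3) => volume (SS p.1 p.2) :=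
    measurable_measure_prodMk_left meas_SS
  have hmf : Measurable fun p : (Fin 3 → V3) × ({l // l ∉ T.1} → V3) => 
      ENNReal.ofReal |(Matrix.of p.1).det| * volume (SS p.1 p.2) :=
    (Measurable.ennreal_ofReal (meas_det.comp measurable_fst).norm).mul hmv
  rw [hpre, (spl_mp T).setLIntegral_comp_preimage ((meas_BN).prod meas_BN) hmf]
  rw [Measure.volume_eq_prod, setLIntegral_prod _ hmf.aemeasurable]
  have hcard : Fintype.card {l // l ∉ T.1} = N - 3 := by
    simp [Fintype.card_subtype_compl, T.2]
  have e1 : ∀ W : Fin 3 → V3, ∫⁻ z in {z : {l // l ∉ T.1} → V3 | ∀ l, z l ∈ BB}, 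
      ENNReal.ofReal |(Matrix.of W).det| * volume (SS W z) = 
      ∫⁻ v in OO, ENNReal.ofReal |(Matrix.of W).det| * GG (Matrix.mulVec (Matrix.of W)⁻¹ (sgnv v)) ^ (N - 3) := by
    intro W
    rw [lintegral_const_mul, sec (N - 3) hcard, lintegral_const_mul]
    · refine Measurable.pow_const (meas_GG.comp ?_) _
      exact meas_invMul measurable_const meas_sgnv
    · exact hmv.comp (measurable_const.prodMk measurable_id)
  simp only [e1]
  rw [lintegral_lintegral_swap]
  · have : ∀ᵐ v : V3 ∂(volume.restrict OO), ∫⁻ W in {W : Fin 3 → V3 | ∀ i, W i ∈ BB}, 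
      ENNReal.ofReal |(Matrix.of W).det| * GG (Matrix.mulVec (Matrix.of W)⁻¹ (sgnv v)) ^ (N - 3) = CC (N - 3) := by
      filter_upwards [ae_restrict_of_ae ae_ne] with v hv
      apply CC_flip
      intro i
      rcases lt_or_gt_of_ne (hv i) with h | h <;> simp [sgnv, h]
    rw [lintegral_congr_ae this]
    rw [lintegral_const, Measure.restrict_apply MeasurableSet.univ, univ_inter, vol_OO, mul_comm]
  · apply Measurable.aemeasurable
    refine Measurable.mul (meas_det.comp measurable_fst).norm.ennreal_ofReal (Measurable.pow_const (meas_GG.comp ?_) _)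
    exact meas_invMul measurable_fst (meas_sgnv.comp measurable_snd)

theorem main_lint (hN : 3 ≤ N) : 
    AEMeasurable (fun x : Fin N → V3 => volume (PP x)) ∧ ∫⁻ x in {x : Fin N → V3 | ∀ i, x i ∈ BB}, volume (PP x) = 
      (N.choose 3 : ENNReal) * (ENNReal.ofReal (4 / 3) * CC (N - 3)) := by
  have hm : ∀ T : Tri N, Measurable fun x : Fin N → V3 => ENNReal.ofReal |(Matrix.of (spl T x).1).det| * 
      volume (SS (spl T x).1 (spl T x).2) := by
    intro T
    have hmv : Measurable fun p : (Fin 3 → V3) × ({l // l ∉ T.1} → V3) => volume (SS p.1 p.2) :=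
      measurable_measure_prodMk_left meas_SS
    have hmf : Measurable fun p : (Fin 3 → V3) × ({l // l ∉ T.1} → V3) => 
        ENNReal.ofReal |(Matrix.of p.1).det| * volume (SS p.1 p.2) :=
      (Measurable.ennreal_ofReal (meas_det.comp measurable_fst).norm).mul hmv
    exact hmf.comp (spl_mp T).measurable
  have hae : (fun x : Fin N → V3 => volume (PP x)) =ᵐ[volume] fun x => 
      ∑ T : Tri N, ENNReal.ofReal |(Matrix.of (spl T x).1).det| * volume (SS (spl T x).1 (spl T x).2) := by
    filter_upwards [ae_gen] with x hx
    exact vol_PP hN x hx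
  constructor
  · exact ⟨_, Finset.measurable_sum _ fun T _ => hm T, hae⟩
  · rw [lintegral_congr_ae (ae_restrict_of_ae hae), lintegral_finsetSum _ fun T _ => hm T]
    simp only [term_T]
    rw [Finset.sum_const, Finset.card_univ, Fintype.card_finset_len, Fintype.card_fin, nsmul_eq_mul]

end MV

namespace MV

theorem disc_area (r : ℝ) (hr : 0 ≤ r) : volume {w : Fin 2 → ℝ | ∑ i, w i ^ 2 ≤ r} = ENNReal.ofReal (Real.pi * r) := by
  have hm : MeasurableSet {w : Fin 2 → ℝ | ∑ i, w i ^ 2 ≤ r} := by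
    apply measurableSet_le _ measurable_const
    fun_prop
  rw [← (PiLp.volume_preserving_ofLp (Fin 2)).measure_preimage hm.nullMeasurableSet]
  have : (@WithLp.ofLp 2 (Fin 2 → ℝ)) ⁻¹' {w : Fin 2 → ℝ | ∑ i, w i ^ 2 ≤ r} = Metric.closedBall (0 : EuclideanSpace ℝ (Fin 2)) (√r) := by
    ext w
    simp only [mem_preimage, mem_ofPred_eq, mem_closedBall_zero_iff, EuclideanSpace.norm_eq]
    rw [Real.sqrt_le_sqrt_iff hr]
    simp
  rw [this, EuclideanSpace.volume_closedBall_fin_two, ← ENNReal.ofReal_pow (Real.sqrt_nonneg _), Real.sq_sqrt hr,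
    mul_comm Real.pi, ENNReal.ofReal_mul hr]

theorem slab (h : ℝ) (h0 : 0 ≤ h) (h1 : h ≤ 1) :
    volume {z : V3 | z ∈ BB ∧ |z 0| ≤ h} = ENNReal.ofReal (2 * Real.pi / 3 * (3 * h - h ^ 3)) := by
  have hmp := (volume_preserving_piFinSuccAbove (fun _ : Fin 3 => ℝ) 0)
  have hm : MeasurableSet {p : ℝ × (Fin 2 → ℝ) | ∑ i, p.2 i ^ 2 ≤ 1 - p.1 ^ 2 ∧ |p.1| ≤ h} := by
    have h1 : MeasurableSet {p : ℝ × (Fin 2 → ℝ) | ∑ i, p.2 i ^ 2 ≤ 1 - p.1 ^ 2} := by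
      apply measurableSet_le <;> fun_prop
    have h2 : MeasurableSet {p : ℝ × (Fin 2 → ℝ) | |p.1| ≤ h} := by
      apply measurableSet_le <;> fun_prop
    exact h1.inter h2
  have e : {z : V3 | z ∈ BB ∧ |z 0| ≤ h} = (MeasurableEquiv.piFinSuccAbove (fun _ : Fin 3 => ℝ) 0) ⁻¹' 
     {p : ℝ × (Fin 2 → ℝ) | ∑ i, p.2 i ^ 2 ≤ 1 - p.1 ^ 2 ∧ |p.1| ≤ h} := by
    ext z
    simp only [mem_ofPred_eq, mem_preimage, BB, MeasurableEquiv.piFinSuccAbove_apply, Fin.insertNthEquiv, Equiv.coe_fn_symm_mk]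
    rw [Fin.sum_univ_succ, le_sub_iff_add_le']
    rfl
  rw [e, hmp.measure_preimage hm.nullMeasurableSet]
  change (volume.prod volume) _ = _
  rw [Measure.prod_apply hm]
  have e2 : ∀ t : ℝ, volume (Prod.mk t ⁻¹' {p : ℝ × (Fin 2 → ℝ) | ∑ i, p.2 i ^ 2 ≤ 1 - p.1 ^ 2 ∧ |p.1| ≤ h}) = 
     (Icc (-h) h).indicator (fun t => ENNReal.ofReal (Real.pi * (1 - t ^ 2))) t := by
    intro t
    by_cases ht : t ∈ Icc (-h) h
    · rw [indicator_of_mem ht, ← disc_area]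
      · congr 1
        ext w
        simp only [mem_preimage, mem_ofPred_eq, and_iff_left_iff_imp]
        intro _
        exact abs_le.2 ht
      · nlinarith [ht.1, ht.2]
    · rw [indicator_of_notMem ht]
      have : Prod.mk t ⁻¹' {p : ℝ × (Fin 2 → ℝ) | ∑ i, p.2 i ^ 2 ≤ 1 - p.1 ^ 2 ∧ |p.1| ≤ h} = ∅ := by
        ext w
        simp only [mem_preimage, mem_ofPred_eq, mem_empty_iff_false, iff_false]
        exact fun hh => ht (abs_le.1 hh.2)
      rw [this, measure_empty]
  simp only [e2]
  rw [lintegral_indicator measurableSet_Icc, ← ofReal_integral_eq_lintegral_ofReal]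
  · congr 1
    rw [integral_Icc_eq_integral_Ioc, ← intervalIntegral.integral_of_le (by linarith)]
    rw [intervalIntegral.integral_const_mul, intervalIntegral.integral_sub (by simp) (by simp)]
    simp
    ring
  · apply Continuous.integrableOn_Icc; fun_prop
  · filter_upwards [ae_restrict_mem measurableSet_Icc] with t ht
    have : 0 ≤ 1 - t ^ 2 := by nlinarith [ht.1, ht.2]
    have := Real.pi_pos
    positivity

theorem GG_eq (u : V3) (hu : 1 ≤ u ⬝ᵥ u) :
    GG u = ENNReal.ofReal (2 * Real.pi / 3 * (3 * (1 / √(u ⬝ᵥ u)) - (1 / √(u ⬝ᵥ u)) ^ 3)) := by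
  set r := √(u ⬝ᵥ u) with hr
  have hr1 : 1 ≤ r := Real.one_le_sqrt.2 hu
  have hr0 : 0 < r := by linarith
  rw [← slab (1 / r) (by positivity) (by rw [div_le_one hr0]; exact hr1)]
  let U : EuclideanSpace ℝ (Fin 3) := WithLp.toLp 2 u
  let V : EuclideanSpace ℝ (Fin 3) := r • EuclideanSpace.single 0 1
  have hUV : ‖U‖ = ‖V‖ := by
    rw [norm_smul, PiLp.norm_single, EuclideanSpace.norm_eq]
    simp only [U, Real.norm_eq_abs, sq_abs, abs_of_pos hr0, abs_one, mul_one]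
    rw [hr, dotProduct]
    congr 1
    simp [sq]
  let R := (ℝ ∙ (U - V))ᗮ.reflection
  have hR : R U = V := Submodule.reflection_sub hUV
  have hm1 : MeasurableSet {z : V3 | z ∈ BB ∧ |z ⬝ᵥ u| ≤ 1} := 
    meas_BB.inter (measurableSet_le (Measurable.norm (meas_dot measurable_id measurable_const)) measurable_const)
  have hm2 : MeasurableSet {z : V3 | z ∈ BB ∧ |z 0| ≤ 1 / r} := 
    meas_BB.inter (measurableSet_le (f := fun z : V3 => |z 0|) (by fun_prop) measurable_const)
  rw [GG, ← (PiLp.volume_preserving_ofLp (Fin 3)).measure_preimage hm1.nullMeasurableSet,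
    ← (PiLp.volume_preserving_ofLp (Fin 3)).measure_preimage hm2.nullMeasurableSet]
  have hm2' := (PiLp.volume_preserving_ofLp (Fin 3)).measurable hm2
  rw [← (LinearIsometryEquiv.measurePreserving R).measure_preimage hm2'.nullMeasurableSet]
  congr 1
  have hB : ∀ z : EuclideanSpace ℝ (Fin 3), WithLp.ofLp z ∈ BB ↔ ‖z‖ ≤ 1 := by
    intro z
    rw [EuclideanSpace.norm_eq, Real.sqrt_le_one]
    simp [BB]
  ext z
  rw [mem_preimage, mem_preimage, mem_preimage, mem_ofPred_eq, mem_ofPred_eq, hB, hB, LinearIsometryEquiv.norm_map]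
  refine and_congr_right fun _ => ?_
  have e1 : WithLp.ofLp z ⬝ᵥ u = r * (R z) 0 := by
    have : inner ℝ (R z) (R U) = inner ℝ z U := LinearIsometryEquiv.inner_map_map _ _ _
    rw [hR] at this
    simp only [V, inner_smul_right, EuclideanSpace.inner_single_right] at this
    simp only [one_mul, conj_trivial] at this
    rw [this, PiLp.inner_apply]
    simp [dotProduct, U, mul_comm]
  rw [e1, abs_mul, abs_of_pos hr0, le_div_iff₀ hr0, mul_comm]

/-! disc moments -/
abbrev V2 := Fin 2 → ℝ
def DD : Set V2 := {w | ∑ i, w i ^ 2 ≤ 1}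

theorem meas_DD : MeasurableSet DD := by
  apply measurableSet_le _ measurable_const
  fun_prop

theorem DD_inv (f : V2 → V2) (hf : Function.Involutive f) (hm : MeasurePreserving f) (hD : ∀ w, f w ∈ DD ↔ w ∈ DD)
    (g : V2 → ℝ) : ∫ w in DD, g (f w) = ∫ w in DD, g w := by
  rw [← integral_indicator meas_DD, ← integral_indicator meas_DD]
  let F := MeasurableEquiv.ofInvolutive f hf hm.measurable
  have := MeasurePreserving.integral_comp' (f := F) hm (DD.indicator g)
  rw [← this]
  congr 1
  funext w
  change DD.indicator (fun w => g (f w)) w = DD.indicator g (f w)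
  by_cases h : w ∈ DD
  · rw [indicator_of_mem h, indicator_of_mem ((hD w).2 h)]
  · rw [indicator_of_notMem h, indicator_of_notMem (fun h' => h ((hD w).1 h'))]

theorem DD_int (g : V2 → ℝ) (hg : Continuous g) : IntegrableOn g DD := by
  apply ContinuousOn.integrableOn_compact _ hg.continuousOn
  rw [Metric.isCompact_iff_isClosed_bounded]
  constructor
  · apply isClosed_le <;> fun_prop
  · refine (Metric.isBounded_closedBall (x := (0 : V2)) (r := 1)).subset fun w hw => ?_
    rw [mem_closedBall_zero_iff, pi_norm_le_iff_of_nonneg zero_le_one]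
    intro i
    have : w i ^ 2 ≤ ∑ i, w i ^ 2 := Finset.single_le_sum (f := fun i => w i ^ 2) (fun i _ => sq_nonneg _) (Finset.mem_univ i)
    rw [Real.norm_eq_abs, ← sq_le_one_iff_abs_le_one]
    exact this.trans hw

theorem flip2 (ε : V2) (hε : ∀ i, ε i = 1 ∨ ε i = -1) (g : V2 → ℝ) :
    ∫ w in DD, g (fun i => ε i * w i) = ∫ w in DD, g w := by
  have hs : ∀ i, ε i ^ 2 = 1 := fun i => by rcases hε i with h | h <;> rw [h] <;> norm_num
  refine DD_inv (fun w i => ε i * w i) ?_ ?_ ?_ g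
  · intro w; funext i; simp only; rw [← mul_assoc, ← sq, hs, one_mul]
  · apply volume_preserving_pi (f := fun i (t : ℝ) => ε i * t)
    intro i
    rcases hε i with h | h
    · simp only [h, one_mul]; exact MeasurePreserving.id _
    · simp only [h, neg_mul, one_mul]; exact Measure.measurePreserving_neg volume
  · intro w; simp [DD, mul_pow, hs]

theorem mom_0 : ∫ w in DD, w 0 = 0 := by
  have := flip2 (fun _ => -1) (fun i => Or.inr rfl) (fun w => w 0)
  simp only [neg_mul, one_mul, integral_neg] at this
  linarith

theorem mom_1 : ∫ w in DD, w 1 = 0 := by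
  have := flip2 (fun _ => -1) (fun i => Or.inr rfl) (fun w => w 1)
  simp only [neg_mul, one_mul, integral_neg] at this
  linarith

theorem mom_01 : ∫ w in DD, w 0 * w 1 = 0 := by
  have := flip2 ![-1, 1] (fun i => by fin_cases i <;> simp) (fun w => w 0 * w 1)
  simp only [Matrix.cons_val_zero, Matrix.cons_val_one, neg_mul, one_mul, integral_neg] at this
  linarith

theorem mom_swap : ∫ w in DD, w 1 ^ 2 = ∫ w in DD, w 0 ^ 2 := by
  refine DD_inv (fun w i => w (Equiv.swap 0 1 i)) ?_ ?_ ?_ (fun w => w 0 ^ 2)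
  · intro w; funext i; simp
  · have := (volume_measurePreserving_piCongrLeft (fun _ : Fin 2 => ℝ) (Equiv.swap 0 1)).symm
    exact this
  · intro w; simp [DD, add_comm]

theorem mom_sum : ∫ w in DD, (w 0 ^ 2 + w 1 ^ 2) = Real.pi / 2 := by
  rw [← integral_indicator meas_DD]
  have h1 := (PiLp.volume_preserving_ofLp (Fin 2)).integral_comp (MeasurableEquiv.toLp 2 (Fin 2 → ℝ)).symm.measurableEmbedding (DD.indicator fun w => w 0 ^ 2 + w 1 ^ 2)
  rw [← h1]
  have h2 := integral_fun_norm_addHaar (volume : Measure (EuclideanSpace ℝ (Fin 2))) (fun r => (Iic (1:ℝ)).indicator (fun r => r ^ 2) r)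
  have h3 : ∀ x : EuclideanSpace ℝ (Fin 2), DD.indicator (fun w => w 0 ^ 2 + w 1 ^ 2) (WithLp.ofLp x) = (Iic (1:ℝ)).indicator (fun r => r ^ 2) ‖x‖ := by
    intro x
    have hn : ‖x‖ ^ 2 = x 0 ^ 2 + x 1 ^ 2 := by rw [EuclideanSpace.norm_sq_eq]; simp
    have : WithLp.ofLp x ∈ DD ↔ ‖x‖ ∈ Iic (1:ℝ) := by
      rw [mem_Iic, ← sq_le_one_iff₀ (norm_nonneg _), hn]; simp [DD]
    simp only [indicator, this, hn]
  simp only [h3, h2]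
  simp only [finrank_euclideanSpace, Fintype.card_fin]
  have h4 : (volume : Measure (EuclideanSpace ℝ (Fin 2))).real (Metric.ball 0 1) = Real.pi := by
    rw [measureReal_def, EuclideanSpace.volume_ball_fin_two]; simp [Real.pi_pos.le]
  rw [h4]
  have h5 : ∫ y in Ioi (0:ℝ), y ^ (2 - 1) • (Iic (1:ℝ)).indicator (fun r => r ^ 2) y = 1 / 4 := by
    have : ∀ y : ℝ, y ^ (2 - 1) • (Iic (1:ℝ)).indicator (fun r => r ^ 2) y = (Iic (1:ℝ)).indicator (fun r => r ^ 3) y := by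
      intro y; simp only [indicator]; split_ifs <;> simp; ring
    simp only [this]
    rw [setIntegral_indicator measurableSet_Iic, Ioi_inter_Iic, ← intervalIntegral.integral_of_le zero_le_one]
    norm_num
  rw [h5]; simp; ring

theorem mom_00 : ∫ w in DD, w 0 ^ 2 = Real.pi / 4 := by
  have h := mom_sum
  rw [integral_add (DD_int _ (by fun_prop)) (DD_int _ (by fun_prop)), mom_swap] at h
  linarith

theorem mom_c (c : ℝ) : ∫ _w in DD, c = Real.pi * c := by
  rw [setIntegral_const, measureReal_def]
  have := disc_area 1 zero_le_one
  rw [show DD = {w : V2 | ∑ i, w i ^ 2 ≤ 1} from rfl, this, ENNReal.toReal_ofReal (by have := Real.pi_pos; positivity)]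
  simp

theorem disc_quad (c : Fin 6 → ℝ) (f : V2 → ℝ) 
    (hf : ∀ w, f w = c 0 + c 1 * w 0 + c 2 * w 1 + c 3 * w 0 ^ 2 + c 4 * (w 0 * w 1) + c 5 * w 1 ^ 2) (hpos : ∀ w, 0 ≤ f w) :
    ∫⁻ w in DD, ENNReal.ofReal (f w) = ENNReal.ofReal (Real.pi * c 0 + Real.pi / 4 * (c 3 + c 5)) := by
  have hfc : Continuous f := by rw [show f = _ from funext hf]; fun_prop
  rw [← ofReal_integral_eq_lintegral_ofReal (DD_int f hfc) (Filter.Eventually.of_forall hpos)]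
  congr 1
  simp only [hf]
  have H := fun g hg => DD_int g hg
  rw [integral_add (H _ (by fun_prop)) (H _ (by fun_prop)), integral_add (H _ (by fun_prop)) (H _ (by fun_prop)),
    integral_add (H _ (by fun_prop)) (H _ (by fun_prop)), integral_add (H _ (by fun_prop)) (H _ (by fun_prop)),
    integral_add (H _ (by fun_prop)) (H _ (by fun_prop))]
  simp only [integral_const_mul, mom_c, mom_0, mom_1, mom_01, mom_swap, mom_00]
  ring

end MV

namespace MV

def ee : (Fin 3 → V3) ≃ᵐ (Fin 3 → ℝ) × (Fin 3 → V2) :=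
  (MeasurableEquiv.piCongrRight (fun _ : Fin 3 => MeasurableEquiv.piFinSuccAbove (fun _ : Fin 3 => ℝ) 2)).trans
    (MeasurableEquiv.arrowProdEquivProdArrow ℝ V2 (Fin 3))

theorem ee_mp : MeasurePreserving ee := by
  have h1 : MeasurePreserving (MeasurableEquiv.piCongrRight (fun _ : Fin 3 => MeasurableEquiv.piFinSuccAbove (fun _ : Fin 3 => ℝ) 2)) :=
    volume_preserving_pi (fun _ : Fin 3 => volume_preserving_piFinSuccAbove (fun _ : Fin 3 => ℝ) 2)
  exact (volume_measurePreserving_arrowProdEquivProdArrow ℝ V2 (Fin 3)).comp h1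

def WW (p : Fin 3 → V2) (q : V3) : Fin 3 → V3 := fun i => ![p i 0, p i 1, q i]

def AA (p : Fin 3 → V2) : Matrix (Fin 3) (Fin 3) ℝ := Matrix.of (fun i => ![p i 0, p i 1, 1])

theorem ee_symm (q p) : ee.symm (q, p) = WW p q := by
  rw [MeasurableEquiv.symm_apply_eq]
  refine Prod.ext ?_ ?_
  · rfl
  · funext i j
    fin_cases j <;> rfl

theorem meas_WW : Measurable (fun x : V3 × (Fin 3 → V2) => WW x.2 x.1) := by
  have := ee.symm.measurable
  convert this using 1
  funext x
  exact (ee_symm _ _).symm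

theorem lint_WW (F : (Fin 3 → V3) → ENNReal) (hF : Measurable F) :
    ∫⁻ W, F W = ∫⁻ p : Fin 3 → V2, ∫⁻ q : V3, F (WW p q) := by
  rw [← ee_mp.symm.lintegral_comp hF]
  rw [Measure.volume_eq_prod, lintegral_prod_symm _ (by
    exact (hF.comp ee.symm.measurable).aemeasurable)]
  simp only [ee_symm]

theorem det_AA (p) : (AA p).det = (p 1 0 - p 0 0) * (p 2 1 - p 0 1) - (p 1 1 - p 0 1) * (p 2 0 - p 0 0) := by
  rw [Matrix.det_fin_three]
  simp [AA]
  ring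

theorem det_WW (p α) : (Matrix.of (WW p (Matrix.mulVec (AA p) α))).det = α 2 * (AA p).det := by
  rw [det_AA, Matrix.det_fin_three]
  simp [AA, WW, Matrix.mulVec, dotProduct, Fin.sum_univ_three]
  ring

theorem lint_mulVec (A : Matrix (Fin 3) (Fin 3) ℝ) (hA : A.det ≠ 0) (f : V3 → ENNReal) (hf : Measurable f) :
    ∫⁻ q, f q = ENNReal.ofReal |A.det| * ∫⁻ α, f (A.mulVec α) := by
  have h := Real.map_matrix_volume_pi_eq_smul_volume_pi hA
  have hm : Measurable (Matrix.toLin' A) := (Matrix.toLin' A).continuous_of_finiteDimensional.measurable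
  have h2 : ∫⁻ α, f (A.mulVec α) = ∫⁻ q, f q ∂(Measure.map (Matrix.toLin' A) volume) := by
    rw [lintegral_map hf hm]
    rfl
  rw [h2, h, lintegral_smul_measure, smul_eq_mul, ← mul_assoc, ← ENNReal.ofReal_mul (abs_nonneg _), abs_inv,
    mul_inv_cancel₀ (abs_ne_zero.2 hA)]
  simp

noncomputable def psi (h : ℝ) : ℝ := 2 * Real.pi / 3 * (3 * h - h ^ 3)

def EE (α : V3) : Set V2 := {p | p 0 ^ 2 + p 1 ^ 2 + (α 0 * p 0 + α 1 * p 1 + α 2) ^ 2 ≤ 1}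

noncomputable def ss (α : V3) : ℝ := √(1 + α 0 ^ 2 + α 1 ^ 2)

theorem WW_mem (p α) (i) : WW p (Matrix.mulVec (AA p) α) i ∈ BB ↔ p i ∈ EE α := by
  simp only [BB, EE, mem_ofPred_eq, WW, AA, Matrix.mulVec, dotProduct, Fin.sum_univ_three]
  simp
  ring_nf

theorem ss_pos (α) : 0 < ss α := Real.sqrt_pos.2 (by positivity)
theorem ss_sq (α) : ss α ^ 2 = 1 + α 0 ^ 2 + α 1 ^ 2 := Real.sq_sqrt (by positivity)

theorem EE_b (α) (p) (h : p ∈ EE α) : α 2 ^ 2 ≤ ss α ^ 2 := by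
  rw [ss_sq]
  simp only [EE, mem_ofPred_eq] at h
  nlinarith [sq_nonneg (α 0 * (α 0 * p 0 + α 1 * p 1 + α 2) + p 0), sq_nonneg (α 1 * (α 0 * p 0 + α 1 * p 1 + α 2) + p 1),
    sq_nonneg (α 0 * p 1 - α 1 * p 0), mul_nonneg (sub_nonneg.2 h) (by positivity : 0 ≤ 1 + α 0 ^ 2 + α 1 ^ 2)]

theorem integrand_eq (k : ℕ) (p α) (hA : (AA p).det ≠ 0) (hp : ∀ i, p i ∈ EE α) :
    ENNReal.ofReal |(Matrix.of (WW p (Matrix.mulVec (AA p) α))).det| *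
      GG (Matrix.mulVec (Matrix.of (WW p (Matrix.mulVec (AA p) α)))⁻¹ 1) ^ k =
    ENNReal.ofReal |(AA p).det| * (ENNReal.ofReal |α 2| * ENNReal.ofReal (psi (|α 2| / ss α)) ^ k) := by
  rw [det_WW, mul_comm (α 2), abs_mul, ENNReal.ofReal_mul (abs_nonneg _), mul_assoc]
  by_cases hb : α 2 = 0
  · simp [hb]
  congr 3
  set W := Matrix.of (WW p (Matrix.mulVec (AA p) α)) with hW
  have hdet : IsUnit W.det := by
    rw [hW, det_WW]
    exact (mul_ne_zero hb hA).isUnit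
  have hu : Matrix.mulVec W ![-(α 0) / α 2, -(α 1) / α 2, 1 / α 2] = 1 := by
    funext i
    simp [hW, WW, AA, Matrix.mulVec, dotProduct, Fin.sum_univ_three]
    field_simp
    ring
  have hu2 : Matrix.mulVec W⁻¹ 1 = ![-(α 0) / α 2, -(α 1) / α 2, 1 / α 2] := by
    rw [← hu, Matrix.mulVec_mulVec, Matrix.nonsing_inv_mul _ hdet, Matrix.one_mulVec]
  have hd : (![-(α 0) / α 2, -(α 1) / α 2, 1 / α 2] : V3) ⬝ᵥ ![-(α 0) / α 2, -(α 1) / α 2, 1 / α 2] = (ss α / |α 2|) ^ 2 := by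
    rw [div_pow, ss_sq, sq_abs]
    simp [dotProduct, Fin.sum_univ_three]
    field_simp
    ring
  have hpos := ss_pos α
  have hb' : 0 < |α 2| := abs_pos.2 hb
  rw [hu2, GG_eq, hd, Real.sqrt_sq (by positivity), one_div_div]
  · rfl
  · rw [hd, div_pow, sq_abs, le_div_iff₀ (by positivity), one_mul]
    exact EE_b α _ (hp 0)

theorem AA_null : volume {p : Fin 3 → V2 | (AA p).det = 0} = 0 := by
  have hm : MeasurableSet {p : Fin 3 → V2 | (AA p).det = 0} := by
    apply measurableSet_eq_fun _ measurable_const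
    simp only [det_AA]
    fun_prop
  apply null_of_line _ hm ![![1, 0], ![0, 1], 0]
  intro x
  apply Set.Finite.measure_zero
  let P : Polynomial ℝ := Polynomial.X ^ 2 + (Polynomial.C (-(x 2 1 - x 0 1) - (x 2 0 - x 0 0) + (x 1 1 - x 0 1)) * Polynomial.X + Polynomial.C (AA x).det)
  have hP : P ≠ 0 := by
    apply Polynomial.Monic.ne_zero
    apply Polynomial.monic_X_pow_add
    refine lt_of_le_of_lt (Polynomial.degree_linear_le) (by norm_num)
  refine (P.roots.toFinset.finite_toSet).subset ?_
  intro t ht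
  simp only [mem_ofPred_eq, det_AA] at ht
  simp only [Finset.mem_coe, Multiset.mem_toFinset, Polynomial.mem_roots hP, Polynomial.IsRoot.def]
  simp [P, det_AA] at ht ⊢
  linarith


noncomputable def Phi (k : ℕ) (α : V3) : ENNReal := ENNReal.ofReal |α 2| * ENNReal.ofReal (psi (|α 2| / ss α)) ^ k

theorem meas_ss : Measurable ss := by
  unfold ss
  fun_prop

theorem meas_Phi (k) : Measurable (Phi k) := by
  unfold Phi psi
  have := meas_ss
  fun_prop

theorem meas_EE : MeasurableSet {x : V3 × V2 | x.2 ∈ EE x.1} := by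
  simp only [EE, mem_ofPred_eq]
  apply measurableSet_le _ measurable_const
  fun_prop

theorem meas_EE3 : MeasurableSet {x : V3 × (Fin 3 → V2) | ∀ i, x.2 i ∈ EE x.1} := by
  have : {x : V3 × (Fin 3 → V2) | ∀ i, x.2 i ∈ EE x.1} = ⋂ i, (fun x => (x.1, x.2 i)) ⁻¹' {x : V3 × V2 | x.2 ∈ EE x.1} := by ext; simp
  rw [this]
  refine MeasurableSet.iInter fun i => ?_
  apply measurableSet_preimage _ meas_EE
  fun_prop

theorem CC_eq1 (k : ℕ) : CC k = ∫⁻ α, Phi k α * ∫⁻ p in {p : Fin 3 → V2 | ∀ i, p i ∈ EE α}, ENNReal.ofReal ((AA p).det ^ 2) := by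
  unfold CC
  rw [← lintegral_indicator meas_BN, lint_WW]
  swap
  · apply Measurable.indicator _ meas_BN
    exact (ENNReal.measurable_ofReal.comp (meas_det.norm)).mul
      ((meas_GG.comp (meas_invMul measurable_id measurable_const)).pow_const k)
  have h1 : ∀ᵐ p : Fin 3 → V2, ∫⁻ q : V3, ({W : Fin 3 → V3 | ∀ i, W i ∈ BB}.indicator (fun W => ENNReal.ofReal |(Matrix.of W).det| * GG (Matrix.mulVec (Matrix.of W)⁻¹ 1) ^ k)) (WW p q) =
      ∫⁻ α, {x : V3 × (Fin 3 → V2) | ∀ i, x.2 i ∈ EE x.1}.indicator (fun x => Phi k x.1 * ENNReal.ofReal ((AA x.2).det ^ 2)) (α, p) := by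
    filter_upwards [compl_mem_ae_iff.2 AA_null] with p hp
    have hA : (AA p).det ≠ 0 := hp
    rw [lint_mulVec (AA p) hA]
    · rw [← lintegral_const_mul']
      · congr 1
        funext α
        by_cases hm : ∀ i, p i ∈ EE α
        · rw [indicator_of_mem (by intro i; exact (WW_mem p α i).2 (hm i)), indicator_of_mem (by exact hm),
            integrand_eq k p α hA hm, ← mul_assoc, ← ENNReal.ofReal_mul (abs_nonneg _), mul_comm]
          rw [← abs_mul, ← sq, abs_of_nonneg (sq_nonneg (AA p).det)]
          rfl
        · rw [indicator_of_notMem, indicator_of_notMem (by exact hm), mul_zero]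
          intro h
          exact hm fun i => (WW_mem p α i).1 (h i)
      · exact ENNReal.ofReal_ne_top
    · have hW : Measurable (WW p) := meas_WW.comp (measurable_id.prodMk measurable_const)
      refine Measurable.comp (g := {W : Fin 3 → V3 | ∀ i, W i ∈ BB}.indicator (fun W => ENNReal.ofReal |(Matrix.of W).det| * GG (Matrix.mulVec (Matrix.of W)⁻¹ 1) ^ k)) ?_ hW
      apply Measurable.indicator _ meas_BN
      exact (ENNReal.measurable_ofReal.comp (meas_det.norm)).mul
        ((meas_GG.comp (meas_invMul measurable_id measurable_const)).pow_const k)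
  rw [lintegral_congr_ae h1]
  have hdm : Measurable fun p : Fin 3 → V2 => (AA p).det := by
    simp only [det_AA]
    fun_prop
  rw [lintegral_lintegral_swap]
  · congr 1
    funext α
    rw [← lintegral_indicator, ← lintegral_const_mul]
    · congr 1
      funext p
      by_cases hm : ∀ i, p i ∈ EE α
      · rw [indicator_of_mem (by exact hm), indicator_of_mem (by exact hm)]
      · rw [indicator_of_notMem (by exact hm), indicator_of_notMem (by exact hm), mul_zero]
    · apply Measurable.indicator
      · fun_prop
      · exact measurable_prodMk_left meas_EE3
    · exact measurable_prodMk_left meas_EE3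
  · apply Measurable.aemeasurable
    have : Measurable ({x : V3 × (Fin 3 → V2) | ∀ i, x.2 i ∈ EE x.1}.indicator (fun x => Phi k x.1 * ENNReal.ofReal ((AA x.2).det ^ 2))) := by
      apply Measurable.indicator _ meas_EE3
      exact ((meas_Phi k).comp measurable_fst).mul (ENNReal.measurable_ofReal.comp ((hdm.comp measurable_snd).pow_const 2))
    exact this.comp measurable_swap

end MV

namespace MV

theorem cons_eq {n : ℕ} (a : V2) (x : Fin n → V2) :
    (MeasurableEquiv.piFinSuccAbove (fun _ : Fin (n+1) => V2) 0).symm (a, x) = Fin.cons a x := by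
  rw [← Fin.insertNth_zero']
  rfl

theorem le_aux (X Y r : ℝ) (hr : 0 < r) (h : X - 1 = r * (Y - 1)) : X ≤ 1 ↔ Y ≤ 1 := by
  rw [← sub_nonpos, h, ← sub_nonpos (a := Y)]
  exact mul_nonpos_iff_pos_imp_nonpos.trans ⟨fun H => H.1 hr, fun H => ⟨fun _ => H, fun _ => by nlinarith⟩⟩

theorem lint_succ {n : ℕ} (μ : Measure V2) [SigmaFinite μ] (F : (Fin (n+1) → V2) → ENNReal) (hF : Measurable F) :
    ∫⁻ x, F x ∂(Measure.pi fun _ : Fin (n+1) => μ) = ∫⁻ a, ∫⁻ x, F (Fin.cons a x) ∂(Measure.pi fun _ : Fin n => μ) ∂μ := by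
  have h := (measurePreserving_piFinSuccAbove (fun _ : Fin (n+1) => μ) 0)
  rw [← h.symm.lintegral_comp hF, lintegral_prod _ (by
    exact (hF.comp (MeasurableEquiv.measurable _)).aemeasurable)]
  simp only [cons_eq]

theorem meas_cons {n : ℕ} : Measurable (fun x : V2 × (Fin n → V2) => (Fin.cons x.1 x.2 : Fin (n+1) → V2)) := by
  have := (MeasurableEquiv.piFinSuccAbove (fun _ : Fin (n+1) => V2) 0).symm.measurable
  convert this using 1
  funext x
  exact (cons_eq _ _).symm

theorem lint3 (S : Set V2) (F : (Fin 3 → V2) → ENNReal) (hF : Measurable F) :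
    ∫⁻ p in {p : Fin 3 → V2 | ∀ i, p i ∈ S}, F p = ∫⁻ a in S, ∫⁻ b in S, ∫⁻ c in S, F ![a, b, c] := by
  have e : {p : Fin 3 → V2 | ∀ i, p i ∈ S} = univ.pi (fun _ => S) := by ext; simp
  rw [e, volume_pi, Measure.restrict_pi_pi, lint_succ _ _ hF]
  congr 1
  funext a
  rw [lint_succ]
  swap
  · exact hF.comp (meas_cons.comp (measurable_const.prodMk measurable_id))
  congr 1
  funext b
  rw [lint_succ]
  swap
  · exact hF.comp (meas_cons.comp (measurable_const.prodMk (meas_cons.comp (measurable_const.prodMk measurable_id))))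
  congr 1
  funext c
  rw [Measure.pi_of_empty, lintegral_dirac]
  congr 1

theorem lint_mulVec2 (A : Matrix (Fin 2) (Fin 2) ℝ) (hA : A.det ≠ 0) (f : V2 → ENNReal) (hf : Measurable f) :
    ∫⁻ q, f q = ENNReal.ofReal |A.det| * ∫⁻ α, f (A.mulVec α) := by
  have h := Real.map_matrix_volume_pi_eq_smul_volume_pi hA
  have hm : Measurable (Matrix.toLin' A) := (Matrix.toLin' A).continuous_of_finiteDimensional.measurable
  have h2 : ∫⁻ α, f (A.mulVec α) = ∫⁻ q, f q ∂(Measure.map (Matrix.toLin' A) volume) := by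
    rw [lintegral_map hf hm]
    rfl
  rw [h2, h, lintegral_smul_measure, smul_eq_mul, ← mul_assoc, ← ENNReal.ofReal_mul (abs_nonneg _), abs_inv,
    mul_inv_cancel₀ (abs_ne_zero.2 hA)]
  simp

theorem affine_cv (c : V2) (A : Matrix (Fin 2) (Fin 2) ℝ) (hA : A.det ≠ 0) (S T : Set V2)
    (hS : MeasurableSet S) (hT : MeasurableSet T)
    (h : ∀ w, c + A.mulVec w ∈ S ↔ w ∈ T) (f : V2 → ENNReal) (hf : Measurable f) :
    ∫⁻ p in S, f p = ENNReal.ofReal |A.det| * ∫⁻ w in T, f (c + A.mulVec w) := by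
  rw [← lintegral_indicator hS, ← lintegral_indicator hT, ← lintegral_add_left_eq_self _ c, lint_mulVec2 A hA]
  · congr 2
    funext w
    by_cases hw : w ∈ T
    · rw [indicator_of_mem hw, indicator_of_mem ((h w).2 hw)]
    · rw [indicator_of_notMem hw, indicator_of_notMem (fun h' => hw ((h w).1 h'))]
  · exact (hf.indicator hS).comp (measurable_const_add c)

theorem alg1 (a0 a1 b s σ κ ρ w0 w1 : ℝ) (hs : s ^ 2 = 1 + a0 ^ 2 + a1 ^ 2) (hσ : s * σ = 1)
    (h1 : κ * (1 + σ) = σ ^ 2) (h2 : κ * (a0 ^ 2 + a1 ^ 2) = 1 - σ) (hρ : ρ ^ 2 = 1 - b ^ 2 * σ ^ 2) :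
    let x := -(b * σ ^ 2 * a0) + ρ * (w0 - κ * (a0 * w0 + a1 * w1) * a0)
    let y := -(b * σ ^ 2 * a1) + ρ * (w1 - κ * (a0 * w0 + a1 * w1) * a1)
    x ^ 2 + y ^ 2 + (a0 * x + a1 * y + b) ^ 2 - 1 = ρ ^ 2 * (w0 ^ 2 + w1 ^ 2 - 1) := by
  intro x y
  have hm : a0 * x + a1 * y + b = b * σ ^ 2 + ρ * σ * (a0 * w0 + a1 * w1) := by
    have e1 : σ ^ 2 * (a0 ^ 2 + a1 ^ 2) = 1 - σ ^ 2 := by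
      have : σ ^ 2 * s ^ 2 = 1 := by rw [← mul_pow, mul_comm, hσ, one_pow]
      rw [hs] at this; linarith
    simp only [x, y]
    linear_combination (-b) * e1 - ρ * (a0 * w0 + a1 * w1) * h2
  have e1 : σ ^ 2 * (a0 ^ 2 + a1 ^ 2) = 1 - σ ^ 2 := by
    have : σ ^ 2 * s ^ 2 = 1 := by rw [← mul_pow, mul_comm, hσ, one_pow]
    rw [hs] at this; linarith
  rw [hm]
  simp only [x, y]
  have key : (w0 - κ * (a0 * w0 + a1 * w1) * a0) ^ 2 + (w1 - κ * (a0 * w0 + a1 * w1) * a1) ^ 2 = w0 ^ 2 + w1 ^ 2 - σ ^ 2 * (a0 * w0 + a1 * w1) ^ 2 := by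
    linear_combination (κ * (a0 * w0 + a1 * w1) ^ 2) * h2 - (a0 * w0 + a1 * w1) ^ 2 * h1
  have key2 : a0 * (w0 - κ * (a0 * w0 + a1 * w1) * a0) + a1 * (w1 - κ * (a0 * w0 + a1 * w1) * a1) = σ * (a0 * w0 + a1 * w1) := by
    linear_combination - (a0 * w0 + a1 * w1) * h2
  linear_combination ρ ^ 2 * key - 2 * b * σ ^ 2 * ρ * key2 + hρ + b ^ 2 * σ ^ 2 * e1

theorem alg2 (a0 a1 b s σ x y : ℝ) (hs : s ^ 2 = 1 + a0 ^ 2 + a1 ^ 2) (hσ : s * σ = 1)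
    (h : x ^ 2 + y ^ 2 + (a0 * x + a1 * y + b) ^ 2 ≤ 1) (hb : 1 ≤ b ^ 2 * σ ^ 2) :
    x = -(b * σ ^ 2 * a0) ∧ y = -(b * σ ^ 2 * a1) := by
  have e1 : σ ^ 2 * (a0 ^ 2 + a1 ^ 2) = 1 - σ ^ 2 := by
    have : σ ^ 2 * s ^ 2 = 1 := by rw [← mul_pow, mul_comm, hσ, one_pow]
    rw [hs] at this; linarith
  have key : x ^ 2 + y ^ 2 + (a0 * x + a1 * y + b) ^ 2 = (x + b * σ ^ 2 * a0) ^ 2 + (y + b * σ ^ 2 * a1) ^ 2 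
      + (a0 * (x + b * σ ^ 2 * a0) + a1 * (y + b * σ ^ 2 * a1)) ^ 2 + b ^ 2 * σ ^ 2 := by
    have e2 : a0 * x + a1 * y + b = (a0 * (x + b * σ ^ 2 * a0) + a1 * (y + b * σ ^ 2 * a1)) + b * σ ^ 2 := by
      linear_combination - b * e1
    rw [e2]
    linear_combination  (b^2 * σ ^ 2) * e1
  have hx : (x + b * σ ^ 2 * a0) ^ 2 ≤ 0 := by
    nlinarith [sq_nonneg (y + b * σ ^ 2 * a1), sq_nonneg (a0 * (x + b * σ ^ 2 * a0) + a1 * (y + b * σ ^ 2 * a1))]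
  have hy : (y + b * σ ^ 2 * a1) ^ 2 ≤ 0 := by
    nlinarith [sq_nonneg (x + b * σ ^ 2 * a0), sq_nonneg (a0 * (x + b * σ ^ 2 * a0) + a1 * (y + b * σ ^ 2 * a1))]
  have hx' := pow_eq_zero_iff (two_ne_zero) |>.1 (le_antisymm hx (sq_nonneg _))
  have hy' := pow_eq_zero_iff (two_ne_zero) |>.1 (le_antisymm hy (sq_nonneg _))
  constructor <;> linarith

theorem J0 : ∫⁻ a in DD, ∫⁻ b in DD, ∫⁻ c in DD, ENNReal.ofReal ((AA ![a, b, c]).det ^ 2) = ENNReal.ofReal (3 * Real.pi ^ 3 / 8) := by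
  have hpi := Real.pi_pos
  have h1 : ∀ a b : V2, ∫⁻ c in DD, ENNReal.ofReal ((AA ![a, b, c]).det ^ 2) =
     ENNReal.ofReal (Real.pi * (a 0 * b 1 - b 0 * a 1) ^ 2 + Real.pi / 4 * ((b 1 - a 1) ^ 2 + (b 0 - a 0) ^ 2)) := by
    intro a b
    rw [disc_quad ![(a 0 * b 1 - b 0 * a 1) ^ 2, -2 * (a 0 * b 1 - b 0 * a 1) * (b 1 - a 1), 2 * (a 0 * b 1 - b 0 * a 1) * (b 0 - a 0),
      (b 1 - a 1) ^ 2, -2 * (b 1 - a 1) * (b 0 - a 0), (b 0 - a 0) ^ 2]]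
    · simp
    · intro c
      rw [det_AA]
      simp
      ring
    · intro w; positivity
  simp only [h1]
  have h2 : ∀ a : V2, ∫⁻ b in DD, ENNReal.ofReal (Real.pi * (a 0 * b 1 - b 0 * a 1) ^ 2 + Real.pi / 4 * ((b 1 - a 1) ^ 2 + (b 0 - a 0) ^ 2)) =
     ENNReal.ofReal (Real.pi ^ 2 / 8 + Real.pi ^ 2 / 2 * (a 0 ^ 2 + a 1 ^ 2)) := by
    intro a
    rw [disc_quad ![Real.pi / 4 * (a 0 ^ 2 + a 1 ^ 2), - Real.pi / 2 * a 0, - Real.pi / 2 * a 1, Real.pi / 4 + Real.pi * a 1 ^ 2, - 2 * Real.pi * a 0 * a 1,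
       Real.pi / 4 + Real.pi * a 0 ^ 2]]
    · simp
      congr 1
      ring
    · intro c
      simp
      ring
    · intro w; positivity
  simp only [h2]
  rw [disc_quad ![Real.pi ^ 2 / 8, 0, 0, Real.pi ^ 2 / 2, 0, Real.pi ^ 2 / 2]]
  · simp
    congr 1
    ring
  · intro c
    simp
    ring
  · intro w; positivity

theorem meas_AA3 {β : Type*} [MeasurableSpace β] {f g h : β → V2} (hf : Measurable f) (hg : Measurable g) (hh : Measurable h) :
    Measurable fun x => ENNReal.ofReal ((AA ![f x, g x, h x]).det ^ 2) := by
  simp only [det_AA]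
  simp
  fun_prop

theorem meas_J1 (S : Set V2) (a : V2) : Measurable fun b => ∫⁻ d in S, ENNReal.ofReal ((AA ![a, b, d]).det ^ 2) := by
  apply Measurable.lintegral_prod_right' (f := fun (x : V2 × V2) => ENNReal.ofReal ((AA ![a, x.1, x.2]).det ^ 2))
  exact meas_AA3 measurable_const measurable_fst measurable_snd

theorem meas_J2 (S : Set V2) : Measurable fun a => ∫⁻ b in S, ∫⁻ d in S, ENNReal.ofReal ((AA ![a, b, d]).det ^ 2) := by
  apply Measurable.lintegral_prod_right' (f := fun (x : V2 × V2) => ∫⁻ d in S, ENNReal.ofReal ((AA ![x.1, x.2, d]).det ^ 2))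
  apply Measurable.lintegral_prod_right' (f := fun (x : (V2 × V2) × V2) => ENNReal.ofReal ((AA ![x.1.1, x.1.2, x.2]).det ^ 2))
  exact meas_AA3 (by fun_prop) (by fun_prop) (by fun_prop)

set_option maxHeartbeats 600000 in
theorem JJ (α : V3) : ∫⁻ p in {p : Fin 3 → V2 | ∀ i, p i ∈ EE α}, ENNReal.ofReal ((AA p).det ^ 2) =
    ENNReal.ofReal (3 * Real.pi ^ 3 / 8 * (max (1 - (α 2 / ss α) ^ 2) 0) ^ 5 / ss α ^ 5) := by
  have hE : MeasurableSet (EE α) := measurable_prodMk_left meas_EE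
  have hdm : Measurable fun p : Fin 3 → V2 => ENNReal.ofReal ((AA p).det ^ 2) := by
    simp only [det_AA]
    fun_prop
  have hs := ss_pos α
  have hs2 := ss_sq α
  have hσ : ss α * (1 / ss α) = 1 := by field_simp
  rw [lint3 _ _ hdm]
  have hm3 : ∀ a b, Measurable fun c => ENNReal.ofReal ((AA ![a, b, c]).det ^ 2) := by
    intro a b
    simp only [det_AA]
    simp
    fun_prop
  by_cases hb : (α 2 / ss α) ^ 2 < 1
  · rw [max_eq_left (by linarith)]
    set σ := 1 / ss α with hσd
    have hσp : 0 < σ := by positivity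
    set κ := σ ^ 2 / (1 + σ) with hκ
    set ρ := √(1 - (α 2 / ss α) ^ 2) with hρ
    have hρp : 0 < ρ := Real.sqrt_pos.2 (by linarith)
    have hρ2 : ρ ^ 2 = 1 - (α 2 / ss α) ^ 2 := Real.sq_sqrt (by linarith)
    have k1 : κ * (1 + σ) = σ ^ 2 := by rw [hκ]; field_simp
    have k2 : κ * (α 0 ^ 2 + α 1 ^ 2) = 1 - σ := by
      have : α 0 ^ 2 + α 1 ^ 2 = ss α ^ 2 - 1 := by linarith
      rw [this, hκ, hσd]
      field_simp
      ring
    have hρ3 : ρ ^ 2 = 1 - α 2 ^ 2 * σ ^ 2 := by rw [hρ2, hσd]; ring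
    let c : V2 := ![-(α 2 * σ ^ 2 * α 0), -(α 2 * σ ^ 2 * α 1)]
    let M : Matrix (Fin 2) (Fin 2) ℝ := !![ρ * (1 - κ * α 0 * α 0), - ρ * κ * α 0 * α 1; - ρ * κ * α 0 * α 1, ρ * (1 - κ * α 1 * α 1)]
    have hMdet : M.det = ρ ^ 2 * σ := by
      simp only [M, Matrix.det_fin_two_of]
      linear_combination - ρ ^ 2 * k2
    have hM0 : 0 < M.det := by rw [hMdet]; positivity
    have hT0 : ∀ w : V2, (c + M.mulVec w) 0 = -(α 2 * σ ^ 2 * α 0) + ρ * (w 0 - κ * (α 0 * w 0 + α 1 * w 1) * α 0) := by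
      intro w
      simp [c, M, dotProduct]
      ring
    have hT1 : ∀ w : V2, (c + M.mulVec w) 1 = -(α 2 * σ ^ 2 * α 1) + ρ * (w 1 - κ * (α 0 * w 0 + α 1 * w 1) * α 1) := by
      intro w
      simp [c, M, dotProduct]
      ring
    have hT : ∀ w, c + M.mulVec w ∈ EE α ↔ w ∈ DD := by
      intro w
      have := alg1 (α 0) (α 1) (α 2) (ss α) σ κ ρ (w 0) (w 1) hs2 hσ k1 k2 hρ3
      simp only [EE, DD, mem_ofPred_eq, hT0, hT1, Fin.sum_univ_two]
      simp only at this
      exact le_aux _ _ _ (by positivity : 0 < ρ ^ 2) this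
    have hdet : ∀ a b d, ENNReal.ofReal ((AA ![c + M.mulVec a, c + M.mulVec b, c + M.mulVec d]).det ^ 2) = 
        ENNReal.ofReal (M.det ^ 2) * ENNReal.ofReal ((AA ![a, b, d]).det ^ 2) := by
      intro a b d
      rw [← ENNReal.ofReal_mul (by positivity), ← mul_pow]
      congr 2
      rw [det_AA, det_AA]
      simp [c, M, dotProduct, Matrix.det_fin_two_of]
      ring
    have cv := affine_cv c M hM0.ne' (EE α) DD hE meas_DD hT
    rw [abs_of_pos hM0] at cv
    have e2 : ∀ a, ∫⁻ b in EE α, ∫⁻ d in EE α, ENNReal.ofReal ((AA ![a, b, d]).det ^ 2) = ENNReal.ofReal M.det * ∫⁻ b in DD, 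
        (ENNReal.ofReal M.det * ∫⁻ d in DD, ENNReal.ofReal ((AA ![a, c + M.mulVec b, c + M.mulVec d]).det ^ 2)) := by
      intro a
      rw [cv _ (meas_J1 _ a)]
      congr 2
      funext b
      rw [cv _ (hm3 _ _)]
    rw [cv _ (meas_J2 _)]
    simp only [e2]
    simp only [hdet]
    simp only [lintegral_const_mul' _ _ ENNReal.ofReal_ne_top, J0]
    simp only [← ENNReal.ofReal_mul hM0.le, ← ENNReal.ofReal_mul (sq_nonneg M.det)]
    congr 1
    rw [hMdet, ← hρ2, hσd]
    field_simp
  · push Not at hb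
    rw [max_eq_right (by linarith)]
    have hz : volume (EE α) = 0 := by
      refine measure_mono_null (t := {![-(α 2 * (1 / ss α) ^ 2 * α 0), -(α 2 * (1 / ss α) ^ 2 * α 1)]}) ?_ (by simp)
      intro p hp
      have := alg2 (α 0) (α 1) (α 2) (ss α) (1 / ss α) (p 0) (p 1) hs2 hσ hp (by rw [← mul_pow]; simpa [div_eq_mul_inv] using hb)
      rw [mem_singleton_iff]
      funext i
      fin_cases i
      · exact this.1
      · exact this.2
    rw [Measure.restrict_eq_zero.2 hz]
    simp

end MV

namespace MV

theorem rad_int : ∫⁻ r in Ioi (0:ℝ), ENNReal.ofReal (r * (1 / √(1 + r ^ 2) ^ 3)) = 1 := by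
  have hd : ∀ x ∈ Ioi (0:ℝ), HasDerivAt (fun r => - (√(1 + r ^ 2))⁻¹) (x * (1 / √(1 + x ^ 2) ^ 3)) x := by
    intro x hx
    have hp : 0 < 1 + x ^ 2 := by positivity
    have h1 : HasDerivAt (fun r : ℝ => 1 + r ^ 2) (2 * x) x := by
      simpa using (hasDerivAt_pow 2 x).const_add 1
    have h2 := ((h1.sqrt hp.ne').inv (Real.sqrt_pos.2 hp).ne').neg
    refine HasDerivAt.congr_deriv h2 ?_
    have := Real.sqrt_pos.2 hp
    set q := √(1 + x ^ 2) with hq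
    clear_value q
    rw [neg_div, neg_neg]
    field_simp
  have hc : ContinuousWithinAt (fun r : ℝ => - (√(1 + r ^ 2))⁻¹) (Ici 0) 0 := by
    apply Continuous.continuousWithinAt
    apply Continuous.neg
    apply Continuous.inv₀ (by fun_prop)
    intro x
    exact (Real.sqrt_pos.2 (by positivity)).ne'
  have hlim : Filter.Tendsto (fun r : ℝ => - (√(1 + r ^ 2))⁻¹) Filter.atTop (nhds 0) := by
    rw [← neg_zero]
    apply Filter.Tendsto.neg
    apply Filter.Tendsto.comp tendsto_inv_atTop_zero
    apply Real.tendsto_sqrt_atTop.comp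
    exact Filter.tendsto_atTop_add_const_left _ _ (Filter.tendsto_pow_atTop two_ne_zero)
  have hn : ∀ x ∈ Ioi (0:ℝ), 0 ≤ x * (1 / √(1 + x ^ 2) ^ 3) := by
    intro x hx
    have : 0 < x := hx
    positivity
  rw [← ofReal_integral_eq_lintegral_ofReal, integral_Ioi_of_hasDerivAt_of_nonneg hc hd hn hlim]
  · simp
  · exact integrableOn_Ioi_deriv_of_nonneg hc hd hn hlim
  · exact (ae_restrict_iff' measurableSet_Ioi).2 (Filter.Eventually.of_forall hn)

theorem plane_int : ∫⁻ a : V2, ENNReal.ofReal (1 / √(1 + a 0 ^ 2 + a 1 ^ 2) ^ 3) = ENNReal.ofReal (2 * Real.pi) := by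
  have h := volume_preserving_finTwoArrow ℝ
  rw [← h.symm.lintegral_comp (by fun_prop), ← lintegral_comp_polarCoord_symm]
  have e : ∀ p : ℝ × ℝ, ENNReal.ofReal p.1 • ENNReal.ofReal (1 / √(1 + ((MeasurableEquiv.finTwoArrow (α := ℝ)).symm (polarCoord.symm p)) 0 ^ 2
     + ((MeasurableEquiv.finTwoArrow (α := ℝ)).symm (polarCoord.symm p)) 1 ^ 2) ^ 3) = ENNReal.ofReal (p.1 * (1 / √(1 + p.1 ^ 2) ^ 3)) * 1 := by
    intro p
    rw [smul_eq_mul, ← ENNReal.ofReal_mul' (by positivity), mul_one]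
    have : ((MeasurableEquiv.finTwoArrow (α := ℝ)).symm (polarCoord.symm p)) 0 = p.1 * Real.cos p.2 := rfl
    rw [this]
    have : ((MeasurableEquiv.finTwoArrow (α := ℝ)).symm (polarCoord.symm p)) 1 = p.1 * Real.sin p.2 := rfl
    rw [this]
    congr 5
    nlinarith [Real.sin_sq_add_cos_sq p.2]
  simp only [e]
  rw [polarCoord_target, Measure.volume_eq_prod, ← Measure.prod_restrict,
    lintegral_prod_mul (f := fun r => ENNReal.ofReal (r * (1 / √(1 + r ^ 2) ^ 3))) (g := fun _ => 1) (by fun_prop) (by fun_prop), rad_int]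
  rw [one_mul, lintegral_one, Measure.restrict_apply_univ, Real.volume_Ioo]
  congr 1
  ring

theorem lint_scale (s : ℝ) (hs : 0 < s) (f : ℝ → ENNReal) (hf : Measurable f) :
    ∫⁻ b, f b = ENNReal.ofReal s * ∫⁻ t, f (s * t) := by
  have h := Real.smul_map_volume_mul_left hs.ne'
  rw [abs_of_pos hs] at h
  conv_lhs => rw [← h]
  rw [lintegral_smul_measure, lintegral_map hf (by fun_prop), smul_eq_mul]

theorem lint_V3 (F : V3 → ENNReal) (hF : Measurable F) :
    ∫⁻ α, F α = ∫⁻ a : V2, ∫⁻ b : ℝ, F ![a 0, a 1, b] := by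
  have h := (volume_preserving_piFinSuccAbove (fun _ : Fin 3 => ℝ) 2)
  rw [← h.symm.lintegral_comp hF, Measure.volume_eq_prod, lintegral_prod_symm _ (by
    exact (hF.comp (MeasurableEquiv.measurable _)).aemeasurable)]
  congr 1
  funext a
  congr 1
  funext b
  congr 1
  rw [MeasurableEquiv.symm_apply_eq]
  refine Prod.ext rfl ?_
  funext j
  fin_cases j <;> rfl

noncomputable def HH (k : ℕ) (t : ℝ) : ENNReal :=
  ENNReal.ofReal |t| * ENNReal.ofReal (psi |t|) ^ k * ENNReal.ofReal (max (1 - t ^ 2) 0 ^ 5)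

theorem CC_eq2 (k : ℕ) : CC k = ENNReal.ofReal (2 * Real.pi) * (ENNReal.ofReal (3 * Real.pi ^ 3 / 8) * ∫⁻ t, HH k t) := by
  have hpi := Real.pi_pos
  rw [CC_eq1]
  simp only [JJ]
  have := meas_ss
  have hmm := meas_Phi k
  rw [lint_V3 _ (by fun_prop), ← plane_int, ← lintegral_mul_const _ (by fun_prop)]
  congr 1
  funext a
  set s := √(1 + a 0 ^ 2 + a 1 ^ 2) with hs
  have hs0 : 0 < s := Real.sqrt_pos.2 (by positivity)
  have hss : ∀ b, ss ![a 0, a 1, b] = s := fun b => rfl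
  simp only [hss, Phi]
  have e2 : ∀ b, (![a 0, a 1, b] : V3) 2 = b := fun b => rfl
  simp only [e2]
  have hmp : Measurable psi := by unfold psi; fun_prop
  rw [lint_scale s hs0 _ (by fun_prop), ← lintegral_const_mul' _ _ ENNReal.ofReal_ne_top, ← lintegral_const_mul' _ _ ENNReal.ofReal_ne_top,
     ← lintegral_const_mul' _ _ ENNReal.ofReal_ne_top]
  congr 1
  funext t
  unfold HH
  have e3 : |s * t| / s = |t| := by rw [abs_mul, abs_of_pos hs0]; field_simp
  have e4 : s * t / s = t := by field_simp
  rw [e3, e4]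
  have e5 : ENNReal.ofReal s * (ENNReal.ofReal |s * t| * ENNReal.ofReal (psi |t|) ^ k * ENNReal.ofReal (3 * Real.pi ^ 3 / 8 * max (1 - t ^ 2) 0 ^ 5 / s ^ 5))
    = ENNReal.ofReal (psi |t|) ^ k * (ENNReal.ofReal s * (ENNReal.ofReal |s * t| * ENNReal.ofReal (3 * Real.pi ^ 3 / 8 * max (1 - t ^ 2) 0 ^ 5 / s ^ 5))) := by ring
  have e6 : ENNReal.ofReal (1 / s ^ 3) * (ENNReal.ofReal (3 * Real.pi ^ 3 / 8) * (ENNReal.ofReal |t| * ENNReal.ofReal (psi |t|) ^ k * ENNReal.ofReal (max (1 - t ^ 2) 0 ^ 5)))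
    = ENNReal.ofReal (psi |t|) ^ k * (ENNReal.ofReal (1 / s ^ 3) * (ENNReal.ofReal (3 * Real.pi ^ 3 / 8) * (ENNReal.ofReal |t| * ENNReal.ofReal (max (1 - t ^ 2) 0 ^ 5)))) := by ring
  rw [e5, e6]
  congr 1
  rw [← ENNReal.ofReal_mul (by positivity), ← ENNReal.ofReal_mul (by positivity), ← ENNReal.ofReal_mul (by positivity), ← ENNReal.ofReal_mul (by positivity),
    ← ENNReal.ofReal_mul (by positivity), abs_mul, abs_of_pos hs0]
  congr 1
  field_simp

theorem HH_int (k : ℕ) : ∫⁻ t, HH k t = ENNReal.ofReal (2 * ((2 * Real.pi / 3) ^ k * ∫ t in (0:ℝ)..1, t * (1 - t ^ 2) ^ 5 * (3 * t - t ^ 3) ^ k)) := by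
  have hpi := Real.pi_pos
  let f : ℝ → ℝ := fun t => t * max (psi t) 0 ^ k * max (1 - t ^ 2) 0 ^ 5
  have h1 : ∀ t, HH k t = ENNReal.ofReal (f |t|) := by
    intro t
    simp only [HH, f]
    rw [ENNReal.ofReal_mul (by positivity), ENNReal.ofReal_mul (abs_nonneg t), ENNReal.ofReal_pow (le_max_right (psi |t|) 0), sq_abs]
    congr 3
    simp [ENNReal.ofReal_max]
  simp only [h1]
  have hcont : Continuous f := by
    unfold f psi
    fun_prop
  have hz : ∀ t, 1 ≤ t → f t = 0 := by
    intro t ht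
    simp only [f]
    rw [max_eq_right (a := 1 - t ^ 2) (by nlinarith)]
    simp
  have hcs : HasCompactSupport (fun t => f |t|) := by
    apply HasCompactSupport.of_support_subset_isCompact (isCompact_Icc (a := (-1:ℝ)) (b := 1))
    intro t ht
    rw [mem_Icc, ← abs_le]
    by_contra hc
    exact ht (hz _ (not_le.1 hc).le)
  rw [← ofReal_integral_eq_lintegral_ofReal]
  · rw [integral_comp_abs]
    congr 2
    rw [intervalIntegral.integral_of_le zero_le_one, ← integral_const_mul]
    rw [setIntegral_eq_of_subset_of_forall_sdiff_eq_zero (f := f) (s := Ioc (0:ℝ) 1) (t := Ioi 0) measurableSet_Ioi (fun x hx => hx.1)]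
    · apply setIntegral_congr_fun measurableSet_Ioc
      intro t ht
      simp only [f, psi]
      rw [max_eq_left, max_eq_left]
      · rw [mul_pow]; ring
      · nlinarith [ht.1, ht.2]
      · have : 0 ≤ 3 * t - t ^ 3 := by
          have : t ^ 3 ≤ t := by nlinarith [ht.1, ht.2, mul_nonneg ht.1.le (sub_nonneg.2 ht.2), sq_nonneg t]
          nlinarith [ht.1]
        positivity
    · intro x hx
      apply hz
      by_contra hc
      exact hx.2 ⟨hx.1, (not_le.1 hc).le⟩
  · exact (hcont.comp continuous_abs).integrable_of_hasCompactSupport hcs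
  · apply Filter.Eventually.of_forall
    intro t
    simp only [f, Pi.zero_apply]
    positivity

theorem CC_eq (k : ℕ) : CC k = ENNReal.ofReal (3 * Real.pi ^ 4 / 2 * ((2 * Real.pi / 3) ^ k * ∫ t in (0:ℝ)..1, t * (1 - t ^ 2) ^ 5 * (3 * t - t ^ 3) ^ k)) := by
  have hpi := Real.pi_pos
  rw [CC_eq2, HH_int, ← ENNReal.ofReal_mul (by positivity), ← ENNReal.ofReal_mul (by positivity)]
  congr 1
  ring

end MV

namespace MV

theorem one_dim (n : ℕ) :
    27 * ((n:ℝ) + 3) * (n + 2) * (n + 1) * (∫ t in (0:ℝ)..1, t * (1 - t ^ 2) ^ 5 * (3 * t - t ^ 3) ^ n)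
      + 105 * ((n:ℝ) + 3) * (n + 2) * (∫ t in (0:ℝ)..1, (1 - t ^ 2) ^ 4 * (3 * t - t ^ 3) ^ (n + 1)) =
    2 ^ (n + 8) * (1 - 1 / ((n:ℝ) + 4)) := by
  have hn : (n:ℝ) + 4 ≠ 0 := by positivity
  rw [← intervalIntegral.integral_const_mul, ← intervalIntegral.integral_const_mul, ← intervalIntegral.integral_add]
  rotate_left
  · apply Continuous.intervalIntegrable; fun_prop
  · apply Continuous.intervalIntegrable; fun_prop
  let w : ℝ → ℝ := fun t => 3 * t - t ^ 3
  let s : ℝ → ℝ := fun t => 1 - t ^ 2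
  have hw : ∀ t, HasDerivAt w (3 * (1 - t ^ 2)) t := by
    intro t
    refine HasDerivAt.congr_deriv (((hasDerivAt_id t).const_mul 3).sub (hasDerivAt_pow 3 t)) ?_
    norm_num; ring
  have hs : ∀ t, HasDerivAt s (- 2 * t) t := by
    intro t
    refine HasDerivAt.congr_deriv ((hasDerivAt_pow 2 t).const_sub 1) ?_
    norm_num
  have key := intervalIntegral.integral_eq_sub_of_hasDerivAt (a := (0:ℝ)) (b := 1)
    (f := fun t => 9 * ((n:ℝ) + 3) * (n + 2) * (w t ^ (n + 1) * (t * s t ^ 4)) + 8 * ((n:ℝ) + 3) * (w t ^ (n + 2) * s t ^ 3)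
      + 24 * ((n:ℝ) + 3) * (w t ^ (n + 2) * s t ^ 2) + 16 * (w t ^ (n + 3) * (t * s t)) + 32 * (w t ^ (n + 3) * t)
      - 16 / ((n:ℝ) + 4) * w t ^ (n + 4))
    (f' := fun t => 27 * ((n:ℝ) + 3) * (n + 2) * (n + 1) * (t * (1 - t ^ 2) ^ 5 * (3 * t - t ^ 3) ^ n)
      + 105 * ((n:ℝ) + 3) * (n + 2) * ((1 - t ^ 2) ^ 4 * (3 * t - t ^ 3) ^ (n + 1))) ?_ ?_
  · rw [key]
    simp only [w, s]
    norm_num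
    field_simp
    ring
  · intro t _
    have h1 := (((hw t).pow (n + 1)).mul ((hasDerivAt_id t).mul ((hs t).pow 4))).const_mul (9 * ((n:ℝ) + 3) * (n + 2))
    have h2 := (((hw t).pow (n + 2)).mul ((hs t).pow 3)).const_mul (8 * ((n:ℝ) + 3))
    have h3 := (((hw t).pow (n + 2)).mul ((hs t).pow 2)).const_mul (24 * ((n:ℝ) + 3))
    have h4 := (((hw t).pow (n + 3)).mul ((hasDerivAt_id t).mul (hs t))).const_mul 16
    have h5 := (((hw t).pow (n + 3)).mul (hasDerivAt_id t)).const_mul 32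
    have h6 := ((hw t).pow (n + 4)).const_mul (16 / ((n:ℝ) + 4))
    refine HasDerivAt.congr_deriv (((((h1.add h2).add h3).add h4).add h5).sub h6) ?_
    simp only [w, s, Pi.pow_apply, Pi.mul_apply, id]
    push_cast
    simp only [Nat.add_sub_cancel, show n + 2 - 1 = n + 1 from rfl, show n + 3 - 1 = n + 2 from rfl, show n + 4 - 1 = n + 3 from rfl, pow_add]
    field_simp
    ring
  · apply Continuous.intervalIntegrable; fun_prop

theorem hull_eq {F : Type*} [AddCommGroup F] [Module ℝ F] {N : ℕ} (hN : 0 < N) (x : Fin N → F) :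
    convexHull ℝ (range x ∪ -range x) = {y | ∃ c : Fin N → ℝ, ∑ i, |c i| ≤ 1 ∧ ∑ i, c i • x i = y} := by
  apply Subset.antisymm
  · apply convexHull_min
    · rintro y (⟨i, rfl⟩ | ⟨i, hi⟩)
      · refine ⟨Pi.single i 1, ?_, ?_⟩
        · simp [Pi.single_apply, apply_ite abs]
        · simp [Pi.single_apply]
      · refine ⟨Pi.single i (-1), ?_, ?_⟩
        · simp [Pi.single_apply, apply_ite abs]
        · simp [Pi.single_apply, hi]
    · rintro y ⟨c, hc, rfl⟩ z ⟨d, hd, rfl⟩ a b ha hb hab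
      refine ⟨fun i => a * c i + b * d i, ?_, ?_⟩
      · calc ∑ i, |a * c i + b * d i| ≤ ∑ i, (a * |c i| + b * |d i|) := by
              apply Finset.sum_le_sum
              intro i _
              refine (abs_add_le _ _).trans ?_
              rw [abs_mul, abs_mul, abs_of_nonneg ha, abs_of_nonneg hb]
          _ = a * ∑ i, |c i| + b * ∑ i, |d i| := by rw [Finset.sum_add_distrib, Finset.mul_sum, Finset.mul_sum]
          _ ≤ 1 := by nlinarith
      · simp only [add_smul, mul_smul, Finset.sum_add_distrib, Finset.smul_sum]
  · rintro y ⟨c, hc, rfl⟩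
    set K := convexHull ℝ (range x ∪ -range x) with hK
    have hconv : Convex ℝ K := convex_convexHull _ _
    have hp : ∀ i, x i ∈ K := fun i => subset_convexHull _ _ (Or.inl ⟨i, rfl⟩)
    have hm : ∀ i, - x i ∈ K := fun i => subset_convexHull _ _ (Or.inr ⟨i, by simp⟩)
    have h0 : (0 : F) ∈ K := by
      have := hconv (hp ⟨0, hN⟩) (hm ⟨0, hN⟩) (a := 1/2) (b := 1/2) (by norm_num) (by norm_num) (by norm_num)
      simpa using this
    by_cases ht : ∑ i, |c i| = 0
    · have : ∀ i, c i = 0 := by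
        intro i
        rw [Finset.sum_eq_zero_iff_of_nonneg (fun _ _ => abs_nonneg _)] at ht
        simpa using ht i (Finset.mem_univ i)
      simpa [this] using h0
    · set t := ∑ i, |c i| with htd
      have ht0 : 0 < t := lt_of_le_of_ne (Finset.sum_nonneg fun _ _ => abs_nonneg _) (Ne.symm ht)
      have hz : ∑ i, (|c i| / t) • (if 0 ≤ c i then x i else - x i) ∈ K := by
        apply hconv.sum_mem
        · intro i _; positivity
        · rw [← Finset.sum_div, ← htd, div_self ht]
        · intro i _
          split_ifs
          · exact hp i
          · exact hm i
      have := hconv.smul_mem_of_zero_mem h0 hz ⟨ht0.le, hc⟩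
      convert this using 1
      rw [Finset.smul_sum]
      apply Finset.sum_congr rfl
      intro i _
      rw [smul_smul, mul_div_cancel₀ _ ht]
      split_ifs with h
      · rw [abs_of_nonneg h]
      · rw [abs_of_neg (not_le.1 h)]; simp

end MV

namespace MV

theorem transfer {N : ℕ} (hN : 3 ≤ N) :
    momentV 3 N (Metric.closedBall (0 : EuclideanSpace ℝ (Fin 3)) 1) 1 =
      (∫⁻ x in {x : Fin N → V3 | ∀ i, x i ∈ BB}, volume (PP x)).toReal / (Real.pi * 4 / 3) ^ (N + 1) := by
  have hpi := Real.pi_pos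
  have hvol : (volume (Metric.closedBall (0 : EuclideanSpace ℝ (Fin 3)) 1)).toReal = Real.pi * 4 / 3 := by
    rw [EuclideanSpace.volume_closedBall_fin_three]
    simp
    positivity
  unfold momentV
  rw [hvol]
  simp only [Real.rpow_one]
  let e : EuclideanSpace ℝ (Fin 3) ≃ᵐ V3 := (MeasurableEquiv.toLp 2 (Fin 3 → ℝ)).symm
  have he : MeasurePreserving e := PiLp.volume_preserving_ofLp (Fin 3)
  let φ : (Fin N → EuclideanSpace ℝ (Fin 3)) ≃ᵐ (Fin N → V3) := MeasurableEquiv.piCongrRight (fun _ => e)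
  have hφ : MeasurePreserving φ := volume_preserving_pi (fun _ : Fin N => he)
  have hv : ∀ x : Fin N → EuclideanSpace ℝ (Fin 3), volume (convexHull ℝ (range x ∪ -range x)) = volume (PP (φ x)) := by
    intro x
    rw [hull_eq (by omega), ← he.measure_preimage_equiv (PP (φ x))]
    congr 1
    ext y
    simp only [PP, mem_preimage, mem_ofPred_eq]
    apply exists_congr
    intro c
    apply and_congr_right
    intro _
    have h1 : e y = WithLp.ofLp y := rfl
    have h2 : ∀ i, φ x i = WithLp.ofLp (x i) := fun i => rfl
    rw [h1]
    simp only [h2]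
    constructor
    · rintro rfl
      simp
    · intro h
      apply WithLp.ofLp_injective 2
      rw [← h]
      simp
  simp only [hv]
  have hset : {x : Fin N → EuclideanSpace ℝ (Fin 3) | ∀ i, x i ∈ Metric.closedBall 0 1} = φ ⁻¹' {x : Fin N → V3 | ∀ i, x i ∈ BB} := by
    ext x
    simp only [mem_preimage, mem_ofPred_eq, BB]
    apply forall_congr'
    intro i
    have h2 : φ x i = WithLp.ofLp (x i) := rfl
    rw [h2, mem_closedBall_zero_iff, EuclideanSpace.norm_eq, Real.sqrt_le_one]
    simp
  rw [hset, hφ.setIntegral_preimage_emb φ.measurableEmbedding (fun y => (volume (PP y)).toReal / (Real.pi * 4 / 3))]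
  obtain ⟨hm, hl⟩ := main_lint hN
  rw [integral_div, integral_toReal hm.restrict]
  · rw [div_div, pow_succ' (Real.pi * 4 / 3)]
  · apply ae_lt_top' hm.restrict
    rw [hl, CC_eq]
    exact ENNReal.mul_ne_top (ENNReal.natCast_ne_top _) (ENNReal.mul_ne_top ENNReal.ofReal_ne_top ENNReal.ofReal_ne_top)

theorem general (n : ℕ) :
    momentV 3 (n + 3) (Metric.closedBall (0 : EuclideanSpace ℝ (Fin 3)) 1) 1 =
      1 - 1 / ((n:ℝ) + 4) - (105 * ((n:ℝ) + 3) * (n + 2) / 2 ^ (n + 8) : ℝ) *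
        ∫ t in (0 : ℝ)..1, (1 - t ^ 2) ^ 4 * (3 * t - t ^ 3) ^ (n + 1) := by
  have hpi := Real.pi_pos
  rw [transfer (by omega), (main_lint (by omega)).2, Nat.add_sub_cancel, CC_eq]
  have h1 := one_dim n
  set X := ∫ t in (0:ℝ)..1, t * (1 - t ^ 2) ^ 5 * (3 * t - t ^ 3) ^ n with hX
  set Y := ∫ t in (0:ℝ)..1, (1 - t ^ 2) ^ 4 * (3 * t - t ^ 3) ^ (n + 1) with hY
  have hX0 : 0 ≤ X := by
    apply intervalIntegral.integral_nonneg zero_le_one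
    intro t ht
    have h2 : 0 ≤ 1 - t ^ 2 := by nlinarith [ht.1, ht.2]
    have h3 : 0 ≤ 3 * t - t ^ 3 := by nlinarith [ht.1, ht.2, mul_nonneg ht.1 h2]
    have := ht.1
    positivity
  have hch : (((n + 3).choose 3 : ℕ) : ℝ) = ((n:ℝ) + 3) * (n + 2) * (n + 1) / 6 := by
    have := Nat.choose_symm_add (a := n) (b := 3)
    rw [← this]
    rw [Nat.cast_choose ℝ (by omega), Nat.add_sub_cancel_left, Nat.factorial_succ, Nat.factorial_succ, Nat.factorial_succ]
    have : ((n.factorial : ℕ) : ℝ) ≠ 0 := by exact_mod_cast n.factorial_ne_zero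
    push_cast
    simp [Nat.factorial]
    field_simp
    ring
  rw [ENNReal.toReal_mul, ENNReal.toReal_mul, ENNReal.toReal_ofReal (by positivity), ENNReal.toReal_ofReal (by positivity), ENNReal.toReal_natCast, hch]
  have h8 : (2:ℝ) ^ (n + 8) ≠ 0 := by positivity
  have hL : ((n:ℝ) + 3) * (n + 2) * (n + 1) / 6 * (4 / 3 * (3 * Real.pi ^ 4 / 2 * ((2 * Real.pi / 3) ^ n * X))) / (Real.pi * 4 / 3) ^ (n + 3 + 1)
     = 27 * ((n:ℝ) + 3) * (n + 2) * (n + 1) * X / 2 ^ (n + 8) := by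
    have e : (Real.pi * 4 / 3) ^ (n + 3 + 1) = (2 * Real.pi / 3) ^ n * 2 ^ n * (Real.pi * 4 / 3) ^ 4 := by
      rw [← mul_pow, show n + 3 + 1 = n + 4 from rfl, pow_add]
      congr 2
      ring
    rw [e, pow_add]
    have : (2 * Real.pi / 3) ^ n ≠ 0 := by positivity
    field_simp
    ring
  rw [hL, div_eq_iff h8]
  have h9 : (1 - 1 / ((n:ℝ) + 4) - 105 * ((n:ℝ) + 3) * (n + 2) / 2 ^ (n + 8) * Y) * 2 ^ (n + 8) = 2 ^ (n + 8) * (1 - 1 / ((n:ℝ) + 4)) - 105 * ((n:ℝ) + 3) * (n + 2) * Y := by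
    generalize 1 - 1 / ((n:ℝ) + 4) = z
    field_simp
  rw [h9]
  linarith

theorem val3 : ∫ t in (0 : ℝ)..1, (1 - t ^ 2) ^ 4 * (3 * t - t ^ 3) ^ 1 = 17 / 60 := by
  rw [intervalIntegral.integral_eq_sub_of_hasDerivAt (f := fun t => - (1 - t ^ 2) ^ 5 / 5 - (1 - t ^ 2) ^ 6 / 12)]
  · norm_num
  · intro t _
    have hs : HasDerivAt (fun t : ℝ => 1 - t ^ 2) (- 2 * t) t := by
      refine HasDerivAt.congr_deriv ((hasDerivAt_pow 2 t).const_sub 1) ?_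
      norm_num
    refine HasDerivAt.congr_deriv ((((hs.pow 5).neg).div_const 5).sub ((hs.pow 6).div_const 12)) ?_
    push_cast
    ring
  · apply Continuous.intervalIntegrable; fun_prop

theorem val4 : ∫ t in (0 : ℝ)..1, (1 - t ^ 2) ^ 4 * (3 * t - t ^ 3) ^ 2 = 2560 / 9009 := by
  rw [intervalIntegral.integral_eq_sub_of_hasDerivAt (f := fun t => 9 * (t ^ 3 / 3) - 42 * (t ^ 5 / 5) + 79 * (t ^ 7 / 7) - 76 * (t ^ 9 / 9) + 39 * (t ^ 11 / 11) - 10 * (t ^ 13 / 13) + t ^ 15 / 15)]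
  · norm_num
  · intro t _
    have h := fun k : ℕ => (hasDerivAt_pow k t).div_const (k : ℝ)
    refine HasDerivAt.congr_deriv ((((((((h 3).const_mul 9).sub ((h 5).const_mul 42)).add ((h 7).const_mul 79)).sub ((h 9).const_mul 76)).add ((h 11).const_mul 39)).sub ((h 13).const_mul 10)).add (h 15)) ?_
    push_cast
    ring
  · apply Continuous.intervalIntegrable; fun_prop

end MV

/-- For every integer `N ≥ 3`,
`𝔼 V_{ℰ³,N} = 1 − 1/(N+1) − (105 N (N−1) / 2^{N+5}) ∫₀¹ (1 − t²)⁴ (3t − t³)^{N−2} dt`,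
where `ℰ³` is the closed unit ball in `ℝ³`; in particular `𝔼 V_{ℰ³,3} = 27/512` and
`𝔼 V_{ℰ³,4} = 72/715`. -/
theorem momentV_ball_formula (N : ℕ) (hN : 3 ≤ N) :
    (momentV 3 N (Metric.closedBall (0 : EuclideanSpace ℝ (Fin 3)) 1) 1 =
      1 - 1 / (N + 1) - (105 * N * (N - 1) / 2 ^ (N + 5) : ℝ) *
        ∫ t in (0 : ℝ)..1, (1 - t ^ 2) ^ 4 * (3 * t - t ^ 3) ^ (N - 2)) ∧
    momentV 3 3 (Metric.closedBall (0 : EuclideanSpace ℝ (Fin 3)) 1) 1 = 27 / 512 ∧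
    momentV 3 4 (Metric.closedBall (0 : EuclideanSpace ℝ (Fin 3)) 1) 1 = 72 / 715 := by
  refine ⟨?_, ?_, ?_⟩
  · obtain ⟨n, rfl⟩ := Nat.exists_eq_add_of_le' hN
    rw [MV.general n, show n + 3 - 2 = n + 1 from rfl, show n + 3 + 5 = n + 8 from rfl]
    push_cast
    congr 2
    · congr 1
      ring
    · congr 1
      ring
  · have := MV.general 0
    simp only [zero_add] at this
    rw [this, MV.val3]
    norm_num
  · have := MV.general 1
    norm_num only at this
    rw [this, MV.val4]
    norm_num
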